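/- arXiv:1312.7241 — 13 statements merged into one kernel-verified Lean document; each statement's English description precedes it below -/
import Mathlib

section
/- For every positive integer m and every real number β, the Duffing boundary value problem for (m, β) has a solution: there exist a real number T > 0 and a C^∞ function f : [-T, T] → ℝ such that f''(t) = -f(t)³ + β·f(t) for all t ∈ [-T, T], f(-T) = f(T) = 0, f'(-T) = m, f'(T) = -m, and f(t) > 0 for all t ∈ (-T, T). -/
/-!
A solution is written down in phase-angle form. Put `a = √(β² + 2m²) + β` and
`b = √(β² + 2m²) - β`; both are positive, with `a - b = 2β` and `a b = 2m²`. The energy identity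
`f'² = m² + β f² - f⁴ / 2` factors as `f'² = (a - f²)(b + f²) / 2`, so the substitution
`f = √a cos φ` turns the problem into the first-order autonomous equation `φ' = g(φ)` with
`g(x) = √((b + a cos² x) / 2)`, which is smooth, even, positive and bounded.

For such a `g`, the primitive `G` of `1 / g` vanishing at `0` is an odd diffeomorphism of `ℝ`, and
its inverse `φ` solves the equation (`exists_angle`). Then `T = G(π / 2)`, so that
`φ(±T) = ±π / 2`, and the required properties of `f = √a cos φ` follow by differentiation.
-/

open Real

/-- The Duffing boundary value problem for `(m, β)`: a time `T > 0` and a `C^∞` function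
`f` with `f'' = -f³ + β·f` on `[-T, T]`, boundary values `f(±T) = 0`,
`f'(-T) = m`, `f'(T) = -m`, and `f > 0` on `(-T, T)`. -/
def IsDuffingSolution (m : ℕ) (β T : ℝ) (f : ℝ → ℝ) : Prop :=
  0 < T ∧ ContDiff ℝ (⊤ : ℕ∞) f ∧
    (∀ t ∈ Set.Icc (-T) T, deriv (deriv f) t = -(f t) ^ 3 + β * f t) ∧
    f (-T) = 0 ∧ f T = 0 ∧ deriv f (-T) = (m : ℝ) ∧ deriv f T = -(m : ℝ) ∧
    (∀ t ∈ Set.Ioo (-T) T, 0 < f t)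

open scoped ContDiff

/-- The autonomous equation `φ' = g(φ)`, `φ(0) = 0`, for `g` smooth, even, positive and bounded,
has an odd, increasing, surjective, smooth solution on `ℝ`. -/
lemma exists_angle (g : ℝ → ℝ) (hg : ContDiff ℝ ∞ g) (hpos : ∀ x, 0 < g x)
    (heven : ∀ x, g (-x) = g x) (M : ℝ) (hM : ∀ x, g x ≤ M) :
    ∃ φ : ℝ → ℝ, ContDiff ℝ ∞ φ ∧ (∀ t, HasDerivAt φ (g (φ t)) t) ∧ StrictMono φ ∧
      Function.Surjective φ ∧ ∀ t, φ (-t) = -φ t := by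
  have hM0 : 0 < M := (hpos 0).trans_le (hM 0)
  have hi : ContDiff ℝ ∞ (fun x => (g x)⁻¹) := hg.inv fun x => (hpos x).ne'
  set G : ℝ → ℝ := fun x => ∫ s in (0 : ℝ)..x, (g s)⁻¹ with hG
  have hd : ∀ x, HasDerivAt G (g x)⁻¹ x := fun x =>
    intervalIntegral.integral_hasDerivAt_right (hi.continuous.intervalIntegrable _ _)
      (hi.continuous.stronglyMeasurableAtFilter _ _) hi.continuous.continuousAt
  have hdiff : Differentiable ℝ G := fun x => (hd x).differentiableAt
  have hderiv : deriv G = fun x => (g x)⁻¹ := funext fun x => (hd x).deriv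
  have hsmooth : ContDiff ℝ ∞ G := by
    rw [contDiff_infty_iff_deriv, hderiv]
    exact ⟨hdiff, hi⟩
  have hmono : StrictMono G :=
    strictMono_of_deriv_pos fun x => by rw [hderiv]; exact inv_pos.2 (hpos x)
  have hG0 : G 0 = 0 := by simp [hG]
  have hodd : ∀ x, G (-x) = -G x := by
    intro x
    have h := intervalIntegral.integral_comp_neg (a := 0) (b := x) (fun s => (g s)⁻¹)
    simp only [heven, neg_zero] at h
    simp only [hG]
    rw [h, intervalIntegral.integral_symm]
  have hlow : ∀ x, 0 ≤ x → M⁻¹ * x ≤ G x := by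
    intro x hx
    have h := mul_sub_le_image_sub_of_le_deriv hdiff (C := M⁻¹)
      (fun y => by rw [hderiv]; exact inv_anti₀ (hpos y) (hM y)) hx
    simpa [hG0] using h
  have hsurj : Function.Surjective G := by
    intro y
    have h1 : |y| ≤ G (M * |y|) := by
      have := hlow (M * |y|) (by positivity)
      rwa [inv_mul_cancel_left₀ hM0.ne'] at this
    have h2 : G (-(M * |y|)) ≤ y := by
      rw [hodd]; linarith [neg_abs_le y]
    exact mem_range_of_exists_le_of_exists_ge hdiff.continuous ⟨_, h2⟩
      ⟨_, (le_abs_self y).trans h1⟩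
  let e : ℝ ≃o ℝ := hmono.orderIsoOfSurjective G hsurj
  have hGe : ∀ t, G (e.symm t) = t := fun t => e.apply_symm_apply t
  refine ⟨e.symm, ?_, fun t => ?_, e.symm.strictMono, e.symm.surjective, fun t => ?_⟩
  · exact e.toHomeomorph.contDiff_symm_deriv (f' := fun x => (g x)⁻¹)
      (fun x => (inv_pos.2 (hpos x)).ne') hd hsmooth
  · have h := HasDerivAt.of_local_left_inverse (f := G) (g := e.symm) (a := t)
      e.symm.continuous.continuousAt (hd _) (inv_pos.2 (hpos _)).ne'
      (Filter.Eventually.of_forall hGe)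
    simpa using h
  · apply hmono.injective
    rw [hGe, hodd, hGe]

/-- Existence of solutions to the Duffing boundary value problem. -/
theorem duffing_bvp_existence (m : ℕ) (hm : 0 < m) (β : ℝ) :
    ∃ (T : ℝ) (f : ℝ → ℝ), IsDuffingSolution m β T f := by
  have hm' : (0 : ℝ) < m := by exact_mod_cast hm
  obtain ⟨a, b, ha, hb, hab, hprod⟩ : ∃ a b : ℝ, 0 < a ∧ 0 < b ∧ a - b = 2 * β ∧
      a * b = 2 * (m : ℝ) ^ 2 := by
    have hs : √(β ^ 2 + 2 * (m : ℝ) ^ 2) ^ 2 = β ^ 2 + 2 * (m : ℝ) ^ 2 :=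
      Real.sq_sqrt (by positivity)
    have hlt : |β| < √(β ^ 2 + 2 * (m : ℝ) ^ 2) :=
      abs_lt_of_sq_lt_sq (by rw [hs]; nlinarith) (Real.sqrt_nonneg _)
    obtain ⟨h1, h2⟩ := abs_lt.1 hlt
    exact ⟨√(β ^ 2 + 2 * (m : ℝ) ^ 2) + β, √(β ^ 2 + 2 * (m : ℝ) ^ 2) - β, by linarith,
      by linarith, by ring, by linear_combination hs⟩
  set q : ℝ → ℝ := fun x => (b + a * cos x ^ 2) / 2 with hq
  have hqpos : ∀ x, 0 < q x := fun x => by simp only [hq]; positivity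
  have hqs : ContDiff ℝ ∞ q := by simp only [hq]; fun_prop
  set g : ℝ → ℝ := fun x => √(q x) with hg
  have hgpos : ∀ x, 0 < g x := fun x => Real.sqrt_pos.2 (hqpos x)
  have hgsq : ∀ x, g x ^ 2 = q x := fun x => Real.sq_sqrt (hqpos x).le
  obtain ⟨φ, hφ, hφd, hφm, hφs, hφo⟩ := exists_angle g (hqs.sqrt fun x => (hqpos x).ne') hgpos
    (fun x => by simp [hg, hq]) (√((b + a) / 2)) (fun x => by
      apply Real.sqrt_le_sqrt
      have := mul_le_mul_of_nonneg_left (Real.cos_sq_le_one x) ha.le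
      simp only [hq]; linarith)
  have hφ0 : φ 0 = 0 := by
    have := hφo 0
    rw [neg_zero] at this
    linarith
  obtain ⟨T, hT⟩ := hφs (π / 2)
  have hTn : φ (-T) = -(π / 2) := by rw [hφo, hT]
  have hA2 : √a ^ 2 = a := Real.sq_sqrt ha.le
  -- `g (±π / 2) = √(b / 2)`, so the boundary slope is `√(a b / 2) = m`.
  have hslope : ∀ x, cos x = 0 → √a * g x = m := by
    intro x hx
    have h : g x ^ 2 = b / 2 := by rw [hgsq]; simp [hq, hx]
    refine (sq_eq_sq₀ (mul_pos (Real.sqrt_pos.2 ha) (hgpos x)).le hm'.le).1 ?_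
    rw [mul_pow, hA2, h]
    linarith
  have hf1 : ∀ t, HasDerivAt (fun t => √a * cos (φ t)) (-(√a * sin (φ t) * g (φ t))) t := fun t =>
    ((hφd t).cos.const_mul (√a)).congr_deriv (by ring)
  have hf1' : deriv (fun t => √a * cos (φ t)) = fun t => -(√a * sin (φ t) * g (φ t)) :=
    funext fun t => (hf1 t).deriv
  have hgd : ∀ x, HasDerivAt g (-(a * cos x * sin x) / (2 * g x)) x := fun x => by
    have h : HasDerivAt q (-(a * cos x * sin x)) x :=
      (((((hasDerivAt_cos x).pow 2).const_mul a).const_add b).div_const 2).congr_deriv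
        (by push_cast; ring)
    exact h.sqrt (hqpos x).ne'
  refine ⟨T, fun t => √a * cos (φ t), ?_, ?_, ?_, ?_, ?_, ?_, ?_, ?_⟩
  · rw [← hφm.lt_iff_lt, hφ0, hT]; positivity
  · exact contDiff_const.mul hφ.cos
  · intro t _
    rw [hf1']
    have h := (((hφd t).sin.const_mul (√a)).mul ((hgd (φ t)).comp t (hφd t))).neg
    have h' := h.deriv
    refine h'.trans ?_
    have hne := (hgpos (φ t)).ne'
    have h3 : -(a * cos (φ t) * sin (φ t)) / (2 * g (φ t)) * g (φ t)
        = -(a * cos (φ t) * sin (φ t)) / 2 := by field_simp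
    have h4 := hgsq (φ t)
    simp only [hq] at h4
    simp only [Function.comp_apply]
    rw [h3]
    linear_combination (-√a * cos (φ t)) * h4 + √a * cos (φ t) ^ 3 * hA2
      + (a * √a * cos (φ t) / 2) * sin_sq_add_cos_sq (φ t) + (√a * cos (φ t) / 2) * hab
  · simp [hTn]
  · simp [hT]
  · rw [hf1']
    simp only [hTn]
    rw [sin_neg, sin_pi_div_two]
    linarith [hslope (-(π / 2)) (by simp)]
  · rw [hf1']
    simp only [hT]
    rw [sin_pi_div_two]
    linarith [hslope (π / 2) (by simp)]
  · intro t ht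
    refine mul_pos (Real.sqrt_pos.2 ha) (cos_pos_of_mem_Ioo ⟨?_, ?_⟩)
    · rw [← hTn]; exact hφm ht.1
    · rw [← hT]; exact hφm ht.2
end

section
/- For every positive integer m and every real number β, the solution of the Duffing boundary value problem for (m, β) is unique: if (T₁, f₁) and (T₂, f₂) both solve the problem, then T₁ = T₂ and f₁(t) = f₂(t) for all t ∈ [-T₁, T₁]. -/
/-!
Shifting time by `T`, a solution of the boundary value problem becomes a solution on `[0, 2T]` of
the initial value problem `f(0) = 0`, `f'(0) = m` for the same autonomous equation. Two solutions of
this initial value problem agree on the common part of their intervals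
(`duffing_eqOn_of_initial`): their difference `d` satisfies the linear equation `d'' = q d` with
`q = β - (f₁² + f₁ f₂ + f₂²)` continuous, so Grönwall's inequality applies to `(d, d')`. If
`T₁ < T₂`, then the second solution would vanish at the shifted time `2T₁`, an interior point of its
interval, against positivity; so `T₁ = T₂`, and the solutions agree everywhere.
-/

open Real

/-- Uniqueness for the initial value problem of the Duffing equation, with the initial conditions
of `f₁` and `f₂` imposed at possibly different times `a₁` and `a₂`. -/
lemma duffing_eqOn_of_initial {β a₁ a₂ L : ℝ} {f₁ f₂ : ℝ → ℝ}
    (hf₁ : ContDiff ℝ (⊤ : ℕ∞) f₁) (hf₂ : ContDiff ℝ (⊤ : ℕ∞) f₂)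
    (ode₁ : ∀ s ∈ Set.Icc 0 L,
      deriv (deriv f₁) (s + a₁) = -(f₁ (s + a₁)) ^ 3 + β * f₁ (s + a₁))
    (ode₂ : ∀ s ∈ Set.Icc 0 L,
      deriv (deriv f₂) (s + a₂) = -(f₂ (s + a₂)) ^ 3 + β * f₂ (s + a₂))
    (h0 : f₁ a₁ = f₂ a₂) (h0' : deriv f₁ a₁ = deriv f₂ a₂) :
    ∀ s ∈ Set.Icc 0 L, f₁ (s + a₁) = f₂ (s + a₂) := by
  have hasDeriv : ∀ {f : ℝ → ℝ}, ContDiff ℝ (⊤ : ℕ∞) f → ∀ a s : ℝ,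
      HasDerivAt (fun s => f (s + a)) (deriv f (s + a)) s := fun hf a s =>
    ((hf.differentiable (by simp)) _).hasDerivAt.comp_add_const s a
  have hd₁ : ContDiff ℝ (⊤ : ℕ∞) (deriv f₁) := (contDiff_infty_iff_deriv.1 hf₁).2
  have hd₂ : ContDiff ℝ (⊤ : ℕ∞) (deriv f₂) := (contDiff_infty_iff_deriv.1 hf₂).2
  set q : ℝ → ℝ := fun s =>
    β - (f₁ (s + a₁) ^ 2 + f₁ (s + a₁) * f₂ (s + a₂) + f₂ (s + a₂) ^ 2) with hq
  have hqc : Continuous q := by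
    have := hf₁.continuous
    have := hf₂.continuous
    fun_prop
  obtain ⟨M, hM⟩ := (isCompact_Icc (a := (0 : ℝ)) (b := L)).exists_bound_of_continuousOn
    hqc.continuousOn
  set F : ℝ → ℝ × ℝ := fun s =>
    (f₁ (s + a₁) - f₂ (s + a₂), deriv f₁ (s + a₁) - deriv f₂ (s + a₂)) with hF
  set F' : ℝ → ℝ × ℝ := fun s =>
    (deriv f₁ (s + a₁) - deriv f₂ (s + a₂),
      deriv (deriv f₁) (s + a₁) - deriv (deriv f₂) (s + a₂)) with hF'
  have hder : ∀ s, HasDerivAt F (F' s) s := fun s =>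
    ((hasDeriv hf₁ a₁ s).sub (hasDeriv hf₂ a₂ s)).prodMk
      ((hasDeriv hd₁ a₁ s).sub (hasDeriv hd₂ a₂ s))
  have hzero := eq_zero_of_abs_deriv_le_mul_abs_self_of_eq_zero_right
    (f := F) (f' := F') (K := max 1 M) (a := 0) (b := L)
    (fun s _ => (hder s).continuousAt.continuousWithinAt)
    (fun s _ => (hder s).hasDerivWithinAt)
    (by simp [hF, h0, h0'])
    (by
      intro s hs
      have hs' := Set.Ico_subset_Icc_self hs
      have hsnd : (F' s).2 = q s * (F s).1 := by
        simp only [hF, hF', hq, ode₁ s hs', ode₂ s hs']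
        ring
      rw [Prod.norm_def (F' s), max_le_iff]
      constructor
      · calc ‖(F' s).1‖ = 1 * ‖(F s).2‖ := by simp [hF, hF']
          _ ≤ max 1 M * ‖F s‖ := by
            gcongr
            · exact le_max_left _ _
            · exact norm_snd_le _
      · rw [hsnd, norm_mul]
        gcongr
        · exact (hM s hs').trans (le_max_right _ _)
        · exact norm_fst_le _)
  intro s hs
  exact sub_eq_zero.1 (congrArg Prod.fst (hzero s hs))

lemma duffing_agree_of_le {m : ℕ} {β T₁ T₂ : ℝ} {f₁ f₂ : ℝ → ℝ}
    (h₁ : IsDuffingSolution m β T₁ f₁) (h₂ : IsDuffingSolution m β T₂ f₂) (hT : T₁ ≤ T₂) :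
    T₁ = T₂ ∧ ∀ t ∈ Set.Icc (-T₁) T₁, f₁ t = f₂ t := by
  obtain ⟨hT₁, hf₁, ode₁, hl₁, hr₁, hl₁', -, -⟩ := h₁
  obtain ⟨hT₂, hf₂, ode₂, hl₂, -, hl₂', -, hpos₂⟩ := h₂
  have key : ∀ s ∈ Set.Icc 0 (2 * T₁), f₁ (s + -T₁) = f₂ (s + -T₂) :=
    duffing_eqOn_of_initial (β := β) hf₁ hf₂
      (fun s hs => ode₁ _ ⟨by linarith [hs.1], by linarith [hs.2]⟩)
      (fun s hs => ode₂ _ ⟨by linarith [hs.1], by linarith [hs.2]⟩)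
      (hl₁.trans hl₂.symm) (hl₁'.trans hl₂'.symm)
  have hTeq : T₁ = T₂ := by
    by_contra hne
    have hlt : T₁ < T₂ := lt_of_le_of_ne hT hne
    have hend := key (2 * T₁) ⟨by linarith, le_rfl⟩
    rw [show 2 * T₁ + -T₁ = T₁ by ring, hr₁] at hend
    exact (hpos₂ (2 * T₁ + -T₂) ⟨by linarith, by linarith⟩).ne hend
  refine ⟨hTeq, fun t ht => ?_⟩
  have := key (t + T₁) ⟨by linarith [ht.1], by linarith [ht.2]⟩
  simpa [← hTeq] using this

/-- Uniqueness of solutions to the Duffing boundary value problem. -/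
theorem duffing_bvp_uniqueness (m : ℕ) (hm : 0 < m) (β : ℝ)
    (T₁ T₂ : ℝ) (f₁ f₂ : ℝ → ℝ)
    (h₁ : IsDuffingSolution m β T₁ f₁) (h₂ : IsDuffingSolution m β T₂ f₂) :
    T₁ = T₂ ∧ ∀ t ∈ Set.Icc (-T₁) T₁, f₁ t = f₂ t := by
  rcases le_total T₁ T₂ with hT | hT
  · exact duffing_agree_of_le h₁ h₂ hT
  · obtain ⟨hTeq, hf⟩ := duffing_agree_of_le h₂ h₁ hT
    exact ⟨hTeq.symm, fun t ht => (hf t (by rwa [hTeq])).symm⟩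
end

section
/- If (T, f) solves the Duffing boundary value problem for (m, β), then all even-order derivatives of f vanish at the endpoints: f^(2l)(T) = f^(2l)(-T) = 0 for every integer l ≥ 1. -/
/-!
Near an endpoint `a` the solution behaves like an odd function of `t - a`, and this is proved at
the level of Taylor coefficients. Suppose the derivatives of `f` of even order up to `N` vanish
at `a`. By the Leibniz rule the derivatives of `f * f` of odd order up to `N` vanish at `a`
(`iteratedDeriv_sq_odd`), hence so do those of `f * f * f` of even order up to `N`
(`iteratedDeriv_cube_even`). Differentiating the equation `N` times, for `N` even, then gives
`f^(N+2)(a) = -(f³)^(N)(a) + β f^(N)(a) = 0`. The induction starts from `f(a) = 0`.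

The equation holds only on `[-T, T]`, but a closed interval has unique derivatives, so it may be
differentiated at the endpoints as well (`iteratedDeriv_eq_of_eqOn_Icc`).
-/

open Real

lemma iteratedDeriv_eq_of_eqOn_Icc {a b x : ℝ} (hab : a < b) (hx : x ∈ Set.Icc a b)
    {g k : ℝ → ℝ} (hg : ContDiff ℝ (⊤ : ℕ∞) g) (hk : ContDiff ℝ (⊤ : ℕ∞) k)
    (hgk : Set.EqOn g k (Set.Icc a b)) (n : ℕ) :
    iteratedDeriv n g x = iteratedDeriv n k x := by
  have hs := uniqueDiffOn_Icc hab
  rw [← iteratedDerivWithin_eq_iteratedDeriv hs (hg.of_le (mod_cast le_top)).contDiffAt hx,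
    ← iteratedDerivWithin_eq_iteratedDeriv hs (hk.of_le (mod_cast le_top)).contDiffAt hx]
  exact iteratedDerivWithin_congr hgk hx

lemma iteratedDeriv_sq_odd {f : ℝ → ℝ} (hf : ContDiff ℝ (⊤ : ℕ∞) f) {a : ℝ} {N : ℕ}
    (h : ∀ k ≤ N, Even k → iteratedDeriv k f a = 0) {n : ℕ} (hnN : n ≤ N) (hn : Odd n) :
    iteratedDeriv n (f * f) a = 0 := by
  have hfn : ContDiffAt ℝ n f a := (hf.of_le (mod_cast le_top)).contDiffAt
  rw [iteratedDeriv_mul hfn hfn]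
  refine Finset.sum_eq_zero fun i hi => ?_
  have hin : i ≤ n := Nat.lt_succ_iff.mp (Finset.mem_range.mp hi)
  rcases Nat.even_or_odd i with he | ho
  · rw [h i (hin.trans hnN) he]; ring
  · rw [h (n - i) ((Nat.sub_le _ _).trans hnN) (Nat.Odd.sub_odd hn ho)]; ring

lemma iteratedDeriv_cube_even {f : ℝ → ℝ} (hf : ContDiff ℝ (⊤ : ℕ∞) f) {a : ℝ} {N : ℕ}
    (h : ∀ k ≤ N, Even k → iteratedDeriv k f a = 0) {n : ℕ} (hnN : n ≤ N) (hn : Even n) :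
    iteratedDeriv n (f * f * f) a = 0 := by
  have hfn : ContDiffAt ℝ n f a := (hf.of_le (mod_cast le_top)).contDiffAt
  have hffn : ContDiffAt ℝ n (f * f) a := hfn.mul hfn
  rw [iteratedDeriv_mul hffn hfn]
  refine Finset.sum_eq_zero fun i hi => ?_
  have hin : i ≤ n := Nat.lt_succ_iff.mp (Finset.mem_range.mp hi)
  rcases Nat.even_or_odd i with he | ho
  · rw [h (n - i) ((Nat.sub_le _ _).trans hnN) ((Nat.even_sub hin).2 (iff_of_true hn he))]; ring
  · rw [iteratedDeriv_sq_odd hf h (hin.trans hnN) ho]; ring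

/-- The parity argument uses only `f a = 0`, so both endpoints are instances. -/
lemma duffing_even_derivatives_vanish_at_zero {β T a : ℝ} {f : ℝ → ℝ} (hT : 0 < T)
    (hf : ContDiff ℝ (⊤ : ℕ∞) f)
    (hode : ∀ t ∈ Set.Icc (-T) T, deriv (deriv f) t = -(f t) ^ 3 + β * f t)
    (ha : a ∈ Set.Icc (-T) T) (hfa : f a = 0) {n : ℕ} (hn : Even n) :
    iteratedDeriv n f a = 0 := by
  have hf'' : ContDiff ℝ (⊤ : ℕ∞) (deriv (deriv f)) := by
    have h1 : ContDiff ℝ (⊤ : ℕ∞) (deriv f) := (contDiff_infty_iff_deriv.mp hf).2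
    exact (contDiff_infty_iff_deriv.mp h1).2
  have hrhs : ContDiff ℝ (⊤ : ℕ∞) (-(f * f * f) + fun t => β * f t) :=
    ((hf.mul hf).mul hf).neg.add (contDiff_const.mul hf)
  induction n using Nat.strong_induction_on with
  | _ n ih =>
    match n, hn, ih with
    | 0, _, _ => simpa using hfa
    | 1, hn, _ => exact absurd hn (by decide)
    | n + 2, hn, ih =>
      have hn' : Even n := by simpa [Nat.even_add] using hn
      have hlow : ∀ k ≤ n, Even k → iteratedDeriv k f a = 0 :=
        fun k hk hke => ih k (by omega) hke
      have hfn : ContDiffAt ℝ n f a := (hf.of_le (mod_cast le_top)).contDiffAt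
      have hcube : ContDiffAt ℝ n (-(f * f * f)) a := ((hfn.mul hfn).mul hfn).neg
      have hlin : ContDiffAt ℝ n (fun t => β * f t) a := contDiffAt_const.mul hfn
      rw [iteratedDeriv_succ', iteratedDeriv_succ',
        iteratedDeriv_eq_of_eqOn_Icc (by linarith) ha hf'' hrhs
          (fun t ht => by
            rw [hode t ht]
            simp only [Pi.add_apply, Pi.neg_apply, Pi.mul_apply]
            ring),
        iteratedDeriv_add hcube hlin,
        iteratedDeriv_neg, iteratedDeriv_const_mul_field,
        iteratedDeriv_cube_even hf hlow le_rfl hn', hlow n le_rfl hn']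
      ring

/-- All even-order derivatives of a Duffing solution vanish at the endpoints. -/
theorem duffing_even_derivatives_vanish (m : ℕ) (hm : 0 < m) (β T : ℝ) (f : ℝ → ℝ)
    (h : IsDuffingSolution m β T f) :
    ∀ l : ℕ, 1 ≤ l →
      iteratedDeriv (2 * l) f T = 0 ∧ iteratedDeriv (2 * l) f (-T) = 0 := by
  intro l _
  obtain ⟨hT, hf, hode, hl, hr, -⟩ := h
  exact ⟨duffing_even_derivatives_vanish_at_zero hT hf hode ⟨by linarith, le_rfl⟩ hr
      (even_two_mul l),
    duffing_even_derivatives_vanish_at_zero hT hf hode ⟨le_rfl, by linarith⟩ hl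
      (even_two_mul l)⟩
end

section
/- If (T, f) solves the Duffing boundary value problem for (m, β), then f is an even function: f(-t) = f(t) for all t ∈ [-T, T]. -/
/-!
The reflection `t ↦ f (-t)` solves the same autonomous equation `x'' = -x³ + β x` (the right-hand
side does not involve `x'`), and it has the same Cauchy data `(0, m)` at `-T` as `f`, because
`f T = 0` and `f' T = -m`. The phase-plane vector field `(x, y) ↦ (y, -x³ + β x)` is `C¹`, hence
Lipschitz on a closed ball containing both trajectories, so uniqueness for ordinary differential
equations gives `f (-t) = f t` on `[-T, T]`.
-/

open Real

/-- A Duffing solution is an even function. -/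
theorem duffing_even (m : ℕ) (hm : 0 < m) (β T : ℝ) (f : ℝ → ℝ)
    (h : IsDuffingSolution m β T f) :
    ∀ t ∈ Set.Icc (-T) T, f (-t) = f t := by
  obtain ⟨hT, hf, hode, hl, hr, hdl, hdr, -⟩ := h
  have hf1 : Differentiable ℝ f := hf.differentiable (by simp)
  have hf' : ContDiff ℝ (⊤ : ℕ∞) (deriv f) := (contDiff_infty_iff_deriv.1 hf).2
  have hf2 : Differentiable ℝ (deriv f) := hf'.differentiable (by simp)
  -- `F` and `G` are the phase-plane trajectories of `f` and of its reflection.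
  let v : ℝ × ℝ → ℝ × ℝ := fun p => (p.2, -p.1 ^ 3 + β * p.1)
  let F : ℝ → ℝ × ℝ := fun t => (f t, deriv f t)
  let G : ℝ → ℝ × ℝ := fun t => (f (-t), -deriv f (-t))
  have hv : ContDiff ℝ 1 v := by fun_prop
  have hFc : Continuous F := hf1.continuous.prodMk hf2.continuous
  have hGc : Continuous G :=
    (hf1.continuous.comp continuous_neg).prodMk (hf2.continuous.comp continuous_neg).neg
  obtain ⟨R, hR⟩ := (((isCompact_Icc (a := -T) (b := T)).image hFc).union
    ((isCompact_Icc (a := -T) (b := T)).image hGc)).isBounded.subset_closedBall 0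
  obtain ⟨K, hK⟩ := hv.contDiffOn.exists_lipschitzOnWith one_ne_zero
    (convex_closedBall (0 : ℝ × ℝ) R) (isCompact_closedBall _ _)
  have hF : ∀ t ∈ Set.Icc (-T) T, HasDerivAt F (v (F t)) t := by
    intro t ht
    have h2 := (hf2 t).hasDerivAt
    rw [hode t ht] at h2
    exact (hf1 t).hasDerivAt.prodMk h2
  have hG : ∀ t ∈ Set.Icc (-T) T, HasDerivAt G (v (G t)) t := by
    intro t ht
    have ht' : -t ∈ Set.Icc (-T) T := ⟨by linarith [ht.2], by linarith [ht.1]⟩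
    have h1 : HasDerivAt (fun s => f (-s)) (-deriv f (-t)) t := by
      simpa [Function.comp_def] using (hf1 (-t)).hasDerivAt.scomp t (hasDerivAt_neg t)
    have h2 : HasDerivAt (fun s => -deriv f (-s)) (deriv (deriv f) (-t)) t := by
      simpa [Function.comp_def] using
        ((hf2 (-t)).hasDerivAt.scomp t (hasDerivAt_neg t)).fun_neg
    rw [hode (-t) ht'] at h2
    exact h1.prodMk h2
  have hsub : Set.Ico (-T) T ⊆ Set.Icc (-T) T := Set.Ico_subset_Icc_self
  have key : Set.EqOn F G (Set.Icc (-T) T) :=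
    ODE_solution_unique_of_mem_Icc_right (v := fun _ => v)
      (s := fun _ => Metric.closedBall 0 R) (fun _ _ => hK)
      hFc.continuousOn (fun t ht => (hF t (hsub ht)).hasDerivWithinAt)
      (fun t ht => hR (Or.inl (Set.mem_image_of_mem F (hsub ht))))
      hGc.continuousOn (fun t ht => (hG t (hsub ht)).hasDerivWithinAt)
      (fun t ht => hR (Or.inr (Set.mem_image_of_mem G (hsub ht))))
      (by simp [F, G, hl, hr, hdl, hdr])
  intro t ht
  exact (congrArg Prod.fst (key ht)).symm
end

section
/- If (T, f) solves the Duffing boundary value problem for (m, β), then f is strictly increasing on [-T, 0] and strictly decreasing on [0, T]. -/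
/-!
The energy `f'² + f⁴/2 - β f²` is conserved and equals `m² > 0`. Hence at a critical point `c` with
`f c > 0` one has `f(c)² > max (2β) 0`, so `f(c)² > β` and
`f''(c) = -f(c) (f(c)² - β) < 0` (`deriv_deriv_neg_of_deriv_eq_zero`).

The boundary data are invariant under `t ↦ -t`, so `f` is even; only `f'(0) = 0` is needed. The odd
part `w(t) = f(t) - f(-t)` solves a linear equation `w'' = q w` with zero Cauchy data at `-T`, and a
Grönwall estimate for `w² + w'²` gives `w'(0) = 0` (`deriv_zero_eq_zero`).

Since `f'` has negative derivative at each of its zeros, it cannot become positive to the right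
of `0`. So `f' ≤ 0` on `(0, T)`, and a zero of `f'` there would be a local maximum of `f'`, forcing
`f'' = 0` at that point, a contradiction. The statement on `[-T, 0]` follows by applying this to the
solution `t ↦ f (-t)`.
-/

open Real

namespace IsDuffingSolution

variable {m : ℕ} {β T : ℝ} {f : ℝ → ℝ}

lemma hasDerivAt (h : IsDuffingSolution m β T f) (t : ℝ) : HasDerivAt f (deriv f t) t :=
  (h.2.1.differentiable (by simp) t).hasDerivAt

lemma hasDerivAt_deriv (h : IsDuffingSolution m β T f) (t : ℝ) :
    HasDerivAt (deriv f) (deriv (deriv f) t) t := by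
  have h1 : ContDiff ℝ 2 f := contDiff_infty.1 h.2.1 2
  have h2 : ContDiff ℝ 1 (deriv f) := by
    have := (contDiff_succ_iff_deriv (n := 1) (f := f)).1 (by simpa [one_add_one_eq_two] using h1)
    exact this.2.2
  exact (h2.differentiable (by simp) t).hasDerivAt

lemma energy_eq (h : IsDuffingSolution m β T f) {t : ℝ} (ht : t ∈ Set.Icc (-T) T) :
    deriv f t ^ 2 + f t ^ 4 / 2 - β * f t ^ 2 = (m : ℝ) ^ 2 := by
  obtain ⟨_, _, hode, hf0, _, hd0, _, _⟩ := id h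
  have hder : ∀ s, HasDerivAt (fun s => deriv f s ^ 2 + f s ^ 4 / 2 - β * f s ^ 2)
      (2 * deriv f s * (deriv (deriv f) s + f s ^ 3 - β * f s)) s := by
    intro s
    have h1 := h.hasDerivAt s
    have h2 := h.hasDerivAt_deriv s
    refine (((h2.pow 2).add ((h1.pow 4).div_const 2)).sub ((h1.pow 2).const_mul β)).congr_deriv ?_
    push_cast
    ring
  have hc := constant_of_has_deriv_right_zero (a := -T) (b := T)
    (fun s _ => (hder s).continuousAt.continuousWithinAt)
    (fun s hs => by
      have h0 := (hder s).hasDerivWithinAt (s := Set.Ici s)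
      rw [hode s ⟨hs.1, hs.2.le⟩] at h0
      exact h0.congr_deriv (by ring)) t ht
  simpa [hf0, hd0] using hc

/-- Every interior critical point is nondegenerate and strictly concave, by conservation of the
positive energy `m²`. -/
lemma deriv_deriv_neg_of_deriv_eq_zero (hm : 0 < m) (h : IsDuffingSolution m β T f) {c : ℝ}
    (hc : c ∈ Set.Ioo (-T) T) (hz : deriv f c = 0) : deriv (deriv f) c < 0 := by
  have hc' : c ∈ Set.Icc (-T) T := ⟨hc.1.le, hc.2.le⟩
  have he := h.energy_eq hc'
  have hpos := h.2.2.2.2.2.2.2 c hc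
  rw [h.2.2.1 c hc']
  rw [hz] at he
  have hm2 : (0 : ℝ) < (m : ℝ) ^ 2 := by positivity
  have hf2 : 0 < f c ^ 2 := by positivity
  have h2 : 0 < f c ^ 2 * (f c ^ 2 - 2 * β) := by nlinarith
  have h3 : 0 < f c ^ 2 - 2 * β := pos_of_mul_pos_right h2 hf2.le
  have h4 : 0 < f c ^ 2 - β := by linarith
  nlinarith [mul_pos hpos h4]

/-- A consequence of the evenness of `f`, obtained from a Grönwall estimate for
`f(t) - f(-t)`. -/
lemma deriv_zero_eq_zero (h : IsDuffingSolution m β T f) : deriv f 0 = 0 := by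
  obtain ⟨hT, hcd, hode, hf0, hf1, hd0, hd1, _⟩ := id h
  have hcont : Continuous f := hcd.continuous
  -- `q` is the coefficient in `w'' = q w`, where `w(t) = f(t) - f(-t)`.
  set q : ℝ → ℝ := fun t => β - (f t ^ 2 + f t * f (-t) + f (-t) ^ 2) with hq
  obtain ⟨K, hK⟩ := (isCompact_Icc (a := -T) (b := T)).exists_bound_of_continuousOn
    (f := q) (by fun_prop)
  have hneg : ∀ t : ℝ, HasDerivAt (fun s : ℝ => -s) (-1) t := fun t => hasDerivAt_neg t
  have hw : ∀ t, HasDerivAt (fun t => f t - f (-t)) (deriv f t + deriv f (-t)) t := fun t =>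
    ((h.hasDerivAt t).sub ((h.hasDerivAt (-t)).comp t (hneg t))).congr_deriv (by ring)
  have hv : ∀ t, HasDerivAt (fun t => deriv f t + deriv f (-t))
      (deriv (deriv f) t - deriv (deriv f) (-t)) t := fun t =>
    ((h.hasDerivAt_deriv t).add
      ((h.hasDerivAt_deriv (-t)).comp t (hneg t))).congr_deriv (by ring)
  have hexp : ∀ t, HasDerivAt (fun t => exp (-(1 + K) * t)) (exp (-(1 + K) * t) * -(1 + K)) t :=
    fun t => (((hasDerivAt_id t).const_mul (-(1 + K))).exp).congr_deriv (by simp)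
  have hF := fun t => (((hw t).pow 2).add ((hv t).pow 2)).mul (hexp t)
  have hanti := antitoneOn_of_deriv_nonpos (convex_Icc (-T) T)
    (fun t _ => (hF t).continuousAt.continuousWithinAt)
    (fun t _ => (hF t).differentiableAt.differentiableWithinAt)
    (fun t ht => by
      rw [interior_Icc] at ht
      rw [(hF t).deriv]
      have ht' : t ∈ Set.Icc (-T) T := ⟨ht.1.le, ht.2.le⟩
      have hqt := abs_le.1 (hK t ht')
      have hvq : deriv (deriv f) t - deriv (deriv f) (-t) = q t * (f t - f (-t)) := by
        rw [hode t ht', hode (-t) ⟨by linarith [ht.2], by linarith [ht.1]⟩, hq]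
        ring
      rw [hvq]
      simp only [Pi.add_apply, Pi.pow_apply]
      set w := f t - f (-t)
      set v := deriv f t + deriv f (-t)
      have key : 2 * w * v + 2 * v * (q t * w) ≤ (1 + K) * (w ^ 2 + v ^ 2) := by
        nlinarith [sq_nonneg (w - v), sq_nonneg (w + v),
          mul_nonneg (sub_nonneg.2 hqt.2) (sq_nonneg (w + v)),
          mul_nonneg (neg_le_iff_add_nonneg.1 hqt.1) (sq_nonneg (w - v))]
      have he := exp_pos (-(1 + K) * t)
      have := mul_nonneg (sub_nonneg.2 key) he.le
      push_cast
      nlinarith [this])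
  have h0 := hanti (show -T ∈ Set.Icc (-T) T from ⟨le_rfl, by linarith⟩)
    (show (0 : ℝ) ∈ Set.Icc (-T) T from ⟨by linarith, hT.le⟩) (by linarith)
  simp [hf0, hf1, hd0, hd1] at h0
  nlinarith [sq_nonneg (deriv f 0)]

lemma deriv_nonpos_right (hm : 0 < m) (h : IsDuffingSolution m β T f) {t : ℝ}
    (ht : t ∈ Set.Icc 0 T) : deriv f t ≤ 0 := by
  refine image_le_of_deriv_right_lt_deriv_boundary (f := deriv f) (f' := deriv (deriv f))
    (B := fun _ => 0) (B' := fun _ => 0)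
    (fun s _ => (h.hasDerivAt_deriv s).continuousAt.continuousWithinAt)
    (fun s _ => (h.hasDerivAt_deriv s).hasDerivWithinAt) h.deriv_zero_eq_zero.le
    (fun s => hasDerivAt_const s 0) (fun s hs hz => ?_) ht
  exact deriv_deriv_neg_of_deriv_eq_zero hm h ⟨by linarith [h.1, hs.1], hs.2⟩ hz

/-- The time reversal `t ↦ f (-t)` solves the same boundary value problem. -/
lemma reverse (h : IsDuffingSolution m β T f) :
    IsDuffingSolution m β T (fun t => f (-t)) := by
  obtain ⟨hT, hcd, hode, hf0, hf1, hd0, hd1, hpos⟩ := id h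
  have hd : deriv (fun t => f (-t)) = fun t => -deriv f (-t) := by
    funext t
    exact deriv_comp_neg f t
  refine ⟨hT, hcd.comp contDiff_neg, fun t ht => ?_, by simpa using hf1, hf0, ?_, ?_,
    fun t ht => hpos _ ⟨by linarith [ht.2], by linarith [ht.1]⟩⟩
  · have h2 : deriv (fun t => -deriv f (-t)) t = deriv (deriv f) (-t) := by
      rw [deriv.fun_neg, deriv_comp_neg (deriv f) t, neg_neg]
    rw [hd, h2, hode (-t) ⟨by linarith [ht.2], by linarith [ht.1]⟩]
  · simp [hd, hd1]
  · simp [hd, hd0]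

lemma deriv_neg_right (hm : 0 < m) (h : IsDuffingSolution m β T f) {t : ℝ}
    (ht : t ∈ Set.Ioo 0 T) : deriv f t < 0 := by
  refine lt_of_le_of_ne (h.deriv_nonpos_right hm ⟨ht.1.le, ht.2.le⟩) fun hz => ?_
  have hmax : IsLocalMax (deriv f) t := by
    filter_upwards [Ioo_mem_nhds ht.1 ht.2] with s hs
    rw [hz]
    exact h.deriv_nonpos_right hm ⟨hs.1.le, hs.2.le⟩
  have hlt := deriv_deriv_neg_of_deriv_eq_zero hm h ⟨by linarith [h.1, ht.1], ht.2⟩ hz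
  exact hlt.ne hmax.deriv_eq_zero

lemma strictAntiOn_right (hm : 0 < m) (h : IsDuffingSolution m β T f) :
    StrictAntiOn f (Set.Icc 0 T) :=
  strictAntiOn_of_deriv_neg (convex_Icc 0 T) h.2.1.continuous.continuousOn
    fun t ht => h.deriv_neg_right hm (by simpa using ht)

end IsDuffingSolution

/-- A Duffing solution is strictly increasing on `[-T, 0]` and strictly decreasing on `[0, T]`. -/
theorem duffing_monotone (m : ℕ) (hm : 0 < m) (β T : ℝ) (f : ℝ → ℝ)
    (h : IsDuffingSolution m β T f) :
    StrictMonoOn f (Set.Icc (-T) 0) ∧ StrictAntiOn f (Set.Icc 0 T) := by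
  refine ⟨fun x hx y hy hxy => ?_, h.strictAntiOn_right hm⟩
  have := h.reverse.strictAntiOn_right hm (a := -y) (b := -x)
    ⟨by linarith [hy.2], by linarith [hy.1]⟩ ⟨by linarith [hx.2], by linarith [hx.1]⟩
    (by linarith)
  simpa using this
end

section
/- If (T, f) solves the Duffing boundary value problem for (m, β), then f attains its maximum at t = 0, with f'(0) = 0 and f(0)² = β + √(β² + 2m²); in particular f(t)² ≤ β + √(β² + 2m²) for all t ∈ [-T, T]. -/
/-!
The energy `f'² + f⁴/2 - β f²` is constant along solutions of the Duffing equation, hence equal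
to its boundary value `m²` on `[-T, T]`; completing the square gives
`(f² - β)² + 2 f'² = β² + 2m²`. The reflected function `t ↦ f (-t)` solves the same equation
with the same data at `-T`, so uniqueness for the first-order system makes `f` even and
`f' 0 = 0`. At `t = 0` the energy identity then reads `(f 0 ² - β)² = β² + 2m²`, and positivity
of `f 0` selects the root with the plus sign; everywhere else the identity gives
`f² ≤ β + √(β² + 2m²)`.
-/

open Real

/-- The Duffing equation as an autonomous first-order system for `(f, f')`. -/
noncomputable def duffingField (β : ℝ) (p : ℝ × ℝ) : ℝ × ℝ := (p.2, -p.1 ^ 3 + β * p.1)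

lemma duffingField_lipschitzOn (β : ℝ) {s : Set (ℝ × ℝ)} (hs : IsCompact s) :
    ∃ K, LipschitzOnWith K (duffingField β) s := by
  have hc : ContDiff ℝ 1 (duffingField β) := by
    unfold duffingField
    fun_prop
  exact hc.locallyLipschitz.locallyLipschitzOn.exists_lipschitzOnWith_of_compact hs

/-- Conservation of energy, normalised by the boundary data at `-T`. -/
lemma IsDuffingSolution.energy {m : ℕ} {β T : ℝ} {f : ℝ → ℝ} (h : IsDuffingSolution m β T f) :
    ∀ t ∈ Set.Icc (-T) T,
      (deriv f t) ^ 2 + (f t) ^ 4 / 2 - β * (f t) ^ 2 = (m : ℝ) ^ 2 := by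
  obtain ⟨hT, hf, hode, hf0, -, hd0, -, -⟩ := h
  have hf2 : ContDiff ℝ 2 f := contDiff_infty.1 hf 2
  have h1 : ∀ t, HasDerivAt f (deriv f t) t := fun t =>
    (hf2.differentiable (by norm_num) t).hasDerivAt
  have h2 : ∀ t, HasDerivAt (deriv f) (deriv (deriv f) t) t := fun t =>
    (hf2.differentiable_deriv_two t).hasDerivAt
  have hE : ∀ t, HasDerivAt (fun t => (deriv f t) ^ 2 + (f t) ^ 4 / 2 - β * (f t) ^ 2)
      (2 * deriv f t * (deriv (deriv f) t + (f t) ^ 3 - β * f t)) t := by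
    intro t
    refine ((((h2 t).pow 2).add (((h1 t).pow 4).div_const 2)).sub
      (((h1 t).pow 2).const_mul β)).congr_deriv ?_
    push_cast
    ring
  intro t ht
  have := constant_of_has_deriv_right_zero (a := -T) (b := T)
    (fun t _ => (hE t).continuousAt.continuousWithinAt)
    (fun t ht => by
      have := (hE t).hasDerivWithinAt (s := Set.Ici t)
      rw [hode t ⟨ht.1, ht.2.le⟩] at this
      convert this using 1
      ring) t ht
  simpa [hf0, hd0] using this

/-- Solutions are even: `t ↦ f (-t)` has the same Cauchy data at `-T`. -/
lemma IsDuffingSolution.even {m : ℕ} {β T : ℝ} {f : ℝ → ℝ} (h : IsDuffingSolution m β T f) :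
    ∀ t ∈ Set.Icc (-T) T, f (-t) = f t ∧ -deriv f (-t) = deriv f t := by
  obtain ⟨hT, hf, hode, hf0, hf1, hd0, hd1, -⟩ := h
  have hf2 : ContDiff ℝ 2 f := contDiff_infty.1 hf 2
  have h1 : ∀ t, HasDerivAt f (deriv f t) t := fun t =>
    (hf2.differentiable (by norm_num) t).hasDerivAt
  have h2 : ∀ t, HasDerivAt (deriv f) (deriv (deriv f) t) t := fun t =>
    (hf2.differentiable_deriv_two t).hasDerivAt
  let F : ℝ → ℝ × ℝ := fun t => (f t, deriv f t)
  let G : ℝ → ℝ × ℝ := fun t => (f (-t), -deriv f (-t))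
  have hF : ∀ t, HasDerivAt F (deriv f t, deriv (deriv f) t) t := fun t => (h1 t).prodMk (h2 t)
  have hG : ∀ t, HasDerivAt G (-deriv f (-t), deriv (deriv f) (-t)) t := by
    intro t
    have a : HasDerivAt (fun t => f (-t)) (-deriv f (-t)) t := by
      simpa [Function.comp_def] using (h1 (-t)).comp t (hasDerivAt_neg t)
    have b : HasDerivAt (fun t => deriv f (-t)) (-deriv (deriv f) (-t)) t := by
      simpa [Function.comp_def] using (h2 (-t)).comp t (hasDerivAt_neg t)
    simpa using a.prodMk b.neg
  have hFc : Continuous F := continuous_iff_continuousAt.2 fun t => (hF t).continuousAt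
  have hGc : Continuous G := continuous_iff_continuousAt.2 fun t => (hG t).continuousAt
  -- The field is only locally Lipschitz, so restrict it to the compact union of the trajectories.
  obtain ⟨K, hK⟩ := duffingField_lipschitzOn β
    (((isCompact_Icc (a := -T) (b := T)).image hFc).union
      ((isCompact_Icc (a := -T) (b := T)).image hGc))
  have key := ODE_solution_unique_of_mem_Icc_right (v := fun _ => duffingField β) (K := K)
    (a := -T) (b := T) (f := F) (g := G) (fun _ _ => hK) hFc.continuousOn
    (fun t ht => by
      have := (hF t).hasDerivWithinAt (s := Set.Ici t)
      rwa [hode t ⟨ht.1, ht.2.le⟩] at this)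
    (fun t ht => Or.inl ⟨t, ⟨ht.1, ht.2.le⟩, rfl⟩) hGc.continuousOn
    (fun t ht => by
      have := (hG t).hasDerivWithinAt (s := Set.Ici t)
      rwa [hode (-t) ⟨by linarith [ht.2], by linarith [ht.1]⟩] at this)
    (fun t ht => Or.inr ⟨t, ⟨ht.1, ht.2.le⟩, rfl⟩)
    (by simp [F, G, hf0, hf1, hd0, hd1])
  intro t ht
  have := key ht
  simp only [F, G, Prod.mk.injEq] at this
  exact ⟨this.1.symm, this.2.symm⟩

/-- A Duffing solution attains its maximum at `t = 0`, with `f'(0) = 0` and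
`f(0)² = β + √(β² + 2m²)`; in particular `f(t)² ≤ β + √(β² + 2m²)` on `[-T, T]`. -/
theorem duffing_maximum (m : ℕ) (hm : 0 < m) (β T : ℝ) (f : ℝ → ℝ)
    (h : IsDuffingSolution m β T f) :
    deriv f 0 = 0 ∧
    (f 0) ^ 2 = β + Real.sqrt (β ^ 2 + 2 * (m : ℝ) ^ 2) ∧
    (∀ t ∈ Set.Icc (-T) T, f t ≤ f 0) ∧
    (∀ t ∈ Set.Icc (-T) T, (f t) ^ 2 ≤ β + Real.sqrt (β ^ 2 + 2 * (m : ℝ) ^ 2)) := by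
  have hE := h.energy
  have hT : 0 < T := h.1
  have h0 : (0 : ℝ) ∈ Set.Icc (-T) T := ⟨by linarith, hT.le⟩
  have hpos : 0 < f 0 := h.2.2.2.2.2.2.2 0 ⟨by linarith, hT⟩
  have hd : deriv f 0 = 0 := by
    have := (h.even 0 h0).2
    rw [neg_zero] at this
    linarith
  have hbound : ∀ t ∈ Set.Icc (-T) T,
      (f t) ^ 2 ≤ β + Real.sqrt (β ^ 2 + 2 * (m : ℝ) ^ 2) := by
    intro t ht
    have : (f t) ^ 2 - β ≤ Real.sqrt (β ^ 2 + 2 * (m : ℝ) ^ 2) :=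
      Real.le_sqrt_of_sq_le (by nlinarith [hE t ht, sq_nonneg (deriv f t)])
    linarith
  have hval : (f 0) ^ 2 = β + Real.sqrt (β ^ 2 + 2 * (m : ℝ) ^ 2) := by
    have e := hE 0 h0
    rw [hd] at e
    have hm' : (0 : ℝ) < (m : ℝ) ^ 2 := by positivity
    -- The energy at `0` is `f 0 ² (f 0 ² / 2 - β) = m²`, so positivity excludes the minus sign.
    have hβ : 0 ≤ (f 0) ^ 2 - β := by
      by_contra hneg
      nlinarith [pow_pos hpos 2]
    have : Real.sqrt (β ^ 2 + 2 * (m : ℝ) ^ 2) = (f 0) ^ 2 - β := by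
      rw [show β ^ 2 + 2 * (m : ℝ) ^ 2 = ((f 0) ^ 2 - β) ^ 2 by linear_combination -2 * e]
      exact Real.sqrt_sq hβ
    linarith
  refine ⟨hd, hval, fun t ht => ?_, hbound⟩
  exact le_of_sq_le_sq (by rw [hval]; exact hbound t ht) hpos.le
end

section
/- If (T, f) solves the Duffing boundary value problem for (m, β), then T = K(k) / (2m² + β²)^{1/4}, where k = √((1 + β/√(2m² + β²))/2) and K(k) is the complete elliptic integral of the first kind. -/
/-!
The proof compares the solution with the closed form `A cos φ` in the variable `φ` (the Jacobi
amplitude) instead of time. Write `S = √(2m² + β²)`, `A = √(S + β)` and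
`q(φ) = √(S - (S + β)/2 · sin² φ)`, which never vanishes. Let time run as
`τ(φ) = -T + ∫_{-π/2}^φ dθ/q(θ)`. Then `φ ↦ (f(τ φ), f'(τ φ))` and
`φ ↦ (A cos φ, -A sin φ · q(φ))` solve the same first-order system with the same value at
`φ = -π/2`, so they agree for as long as `τ φ ≤ T` (`system_unique`, a Grönwall argument, and
`solution_eq_cos`). Since `cos` is positive on `(-π/2, π/2)` and vanishes at `π/2`, while `f` is
positive on `(-T, T)` and vanishes at `T`, necessarily `τ(π/2) = T`, that is
`2T = ∫_{-π/2}^{π/2} dθ/q(θ)`.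

Finally `q(θ) = √S · √(1 - k² sin² θ)`, and the substitution `x = sin θ` turns the integral over
`[0, π/2]` into the complete elliptic integral (`elliptic_integral_trig`). The advantage of this
parametrisation is that no integrand in the comparison step is singular, and no inverse function
has to be constructed.
-/

open Real

/-- The elliptic modulus `k = √((1 + β/√(2m² + β²))/2)` associated to `(m, β)`. -/
noncomputable def duffingModulus (m : ℕ) (β : ℝ) : ℝ :=
  Real.sqrt ((1 + β / Real.sqrt (2 * (m : ℝ) ^ 2 + β ^ 2)) / 2)

/-- Uniqueness for the Duffing system `u' = w v`, `v' = w (-u³ + β u)` with a continuous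
time-change factor `w`: the squared distance of two solutions satisfies a linear Grönwall
inequality. -/
lemma system_unique {β a b : ℝ} {w u₁ v₁ u₂ v₂ : ℝ → ℝ} (hab : a ≤ b) (hw : Continuous w)
    (hu₁ : ∀ x ∈ Set.Icc a b, HasDerivAt u₁ (w x * v₁ x) x)
    (hv₁ : ∀ x ∈ Set.Icc a b, HasDerivAt v₁ (w x * (-(u₁ x) ^ 3 + β * u₁ x)) x)
    (hu₂ : ∀ x ∈ Set.Icc a b, HasDerivAt u₂ (w x * v₂ x) x)
    (hv₂ : ∀ x ∈ Set.Icc a b, HasDerivAt v₂ (w x * (-(u₂ x) ^ 3 + β * u₂ x)) x)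
    (hu : u₁ a = u₂ a) (hv : v₁ a = v₂ a) : u₁ b = u₂ b := by
  have cu₁ : ContinuousOn u₁ (Set.Icc a b) := fun x hx => (hu₁ x hx).continuousAt.continuousWithinAt
  have cu₂ : ContinuousOn u₂ (Set.Icc a b) := fun x hx => (hu₂ x hx).continuousAt.continuousWithinAt
  -- `u₁³ - u₂³ = (u₁ - u₂) (u₁² + u₁ u₂ + u₂²)`, so the derivative of the
  -- squared distance is `2 w p (u₁ - u₂) (v₁ - v₂)` with the following `p`.
  set p : ℝ → ℝ := fun x => 1 + (-(u₁ x ^ 2 + u₁ x * u₂ x + u₂ x ^ 2) + β) with hp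
  have cp : ContinuousOn (fun x => w x * p x) (Set.Icc a b) := by
    have := hw.continuousOn (s := Set.Icc a b)
    simp only [hp]
    fun_prop
  obtain ⟨C, hC⟩ := isCompact_Icc.exists_bound_of_continuousOn cp
  have hder : ∀ x ∈ Set.Icc a b,
      HasDerivAt (fun x => (u₁ x - u₂ x) ^ 2 + (v₁ x - v₂ x) ^ 2)
        (2 * (w x * p x) * ((u₁ x - u₂ x) * (v₁ x - v₂ x))) x := by
    intro x hx
    refine ((((hu₁ x hx).sub (hu₂ x hx)).pow 2).add
      (((hv₁ x hx).sub (hv₂ x hx)).pow 2)).congr_deriv ?_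
    simp only [hp, Pi.sub_apply]
    push_cast
    ring
  have key := eq_zero_of_abs_deriv_le_mul_abs_self_of_eq_zero_right (K := C) (a := a) (b := b)
    (f := fun x => (u₁ x - u₂ x) ^ 2 + (v₁ x - v₂ x) ^ 2)
    (fun x hx => (hder x hx).continuousAt.continuousWithinAt)
    (fun x hx => (hder x (Set.Ico_subset_Icc_self hx)).hasDerivWithinAt)
    (by simp [hu, hv])
    (by
      intro x hx
      have h1 := hC x (Set.Ico_subset_Icc_self hx)
      rw [Real.norm_eq_abs] at h1
      rw [Real.norm_eq_abs, Real.norm_eq_abs, abs_mul, abs_mul, abs_two,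
        abs_of_nonneg (a := (u₁ x - u₂ x) ^ 2 + (v₁ x - v₂ x) ^ 2) (by positivity)]
      have h2 : 2 * |(u₁ x - u₂ x) * (v₁ x - v₂ x)| ≤ (u₁ x - u₂ x) ^ 2 + (v₁ x - v₂ x) ^ 2 := by
        rw [abs_mul, ← sq_abs (u₁ x - u₂ x), ← sq_abs (v₁ x - v₂ x)]
        nlinarith [sq_nonneg (|u₁ x - u₂ x| - |v₁ x - v₂ x|)]
      calc 2 * |w x * p x| * |(u₁ x - u₂ x) * (v₁ x - v₂ x)|
          = |w x * p x| * (2 * |(u₁ x - u₂ x) * (v₁ x - v₂ x)|) := by ring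
        _ ≤ C * ((u₁ x - u₂ x) ^ 2 + (v₁ x - v₂ x) ^ 2) :=
            mul_le_mul h1 h2 (by positivity) ((abs_nonneg _).trans h1))
    b ⟨hab, le_rfl⟩
  nlinarith [sq_nonneg (u₁ b - u₂ b), sq_nonneg (v₁ b - v₂ b)]

/-- The speed `q(φ) = √(S - (S + β)/2 · sin² φ)` of the amplitude `φ` along the solution. -/
noncomputable def ampSpeed (S β φ : ℝ) : ℝ := √(S - (S + β) / 2 * sin φ ^ 2)

lemma radicand_pos {S β : ℝ} (h₁ : -β < S) (h₂ : β < S) (φ : ℝ) :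
    0 < S - (S + β) / 2 * sin φ ^ 2 := by
  nlinarith [sin_sq_le_one φ]

lemma ampSpeed_pos {S β : ℝ} (h₁ : -β < S) (h₂ : β < S) (φ : ℝ) : 0 < ampSpeed S β φ :=
  Real.sqrt_pos.2 (radicand_pos h₁ h₂ φ)

lemma continuous_ampSpeed (S β : ℝ) : Continuous (ampSpeed S β) := by
  unfold ampSpeed
  fun_prop

lemma hasDerivAt_ampSpeed {S β : ℝ} (h₁ : -β < S) (h₂ : β < S) (φ : ℝ) :
    HasDerivAt (ampSpeed S β) (-((S + β) / 2 * sin φ * cos φ) / ampSpeed S β φ) φ := by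
  have h := ((((hasDerivAt_sin φ).pow 2).const_mul ((S + β) / 2)).const_sub S).sqrt
    (radicand_pos h₁ h₂ φ).ne'
  refine h.congr_deriv ?_
  have := (ampSpeed_pos h₁ h₂ φ).ne'
  change _ / (2 * ampSpeed S β φ) = _
  field_simp
  push_cast
  ring

/-- As long as the time `τ` stays in `[-T, T]`, the solution is `f (τ φ) = A cos φ`. -/
lemma solution_eq_cos {m : ℕ} {β T S : ℝ} {f τ : ℝ → ℝ} (h : IsDuffingSolution m β T f)
    (h₁ : -β < S) (h₂ : β < S) (hS : S ^ 2 = 2 * (m : ℝ) ^ 2 + β ^ 2)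
    (hτ : ∀ φ, HasDerivAt τ (1 / ampSpeed S β φ) φ) (hτ0 : τ (-(π / 2)) = -T)
    {b : ℝ} (hb : -(π / 2) ≤ b) (hmem : ∀ φ ∈ Set.Icc (-(π / 2)) b, τ φ ∈ Set.Icc (-T) T) :
    f (τ b) = √(S + β) * cos b := by
  obtain ⟨hT, hf, hode, hf0, -, hf'0, -, -⟩ := h
  have hA : √(S + β) ^ 2 = S + β := Real.sq_sqrt (by linarith)
  have hdf : Differentiable ℝ f := hf.differentiable (by simp)
  have hddf : Differentiable ℝ (deriv f) := by
    have h2 : ContDiff ℝ 2 f := contDiff_infty.1 hf 2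
    exact ((contDiff_succ_iff_deriv (n := 1)).1 h2).2.2.differentiable (by simp)
  refine system_unique (β := β) (w := fun φ => 1 / ampSpeed S β φ) (u₁ := fun φ => f (τ φ))
    (v₁ := fun φ => deriv f (τ φ)) (u₂ := fun φ => √(S + β) * cos φ)
    (v₂ := fun φ => -(√(S + β) * sin φ * ampSpeed S β φ)) hb ?_ ?_ ?_ ?_ ?_ ?_ ?_
  · exact continuous_const.div (continuous_ampSpeed S β) fun φ => (ampSpeed_pos h₁ h₂ φ).ne'
  · intro φ _
    refine ((hdf (τ φ)).hasDerivAt.comp φ (hτ φ)).congr_deriv ?_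
    ring
  · intro φ hφ
    refine ((hddf (τ φ)).hasDerivAt.comp φ (hτ φ)).congr_deriv ?_
    rw [hode _ (hmem φ hφ)]
    ring
  · intro φ _
    refine ((hasDerivAt_cos φ).const_mul _).congr_deriv ?_
    have := (ampSpeed_pos h₁ h₂ φ).ne'
    field_simp
  · intro φ _
    refine ((((hasDerivAt_sin φ).const_mul (√(S + β))).mul
      (hasDerivAt_ampSpeed h₁ h₂ φ)).neg).congr_deriv ?_
    have := (ampSpeed_pos h₁ h₂ φ).ne'
    have hq : ampSpeed S β φ ^ 2 = S - (S + β) / 2 * sin φ ^ 2 :=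
      Real.sq_sqrt (radicand_pos h₁ h₂ φ).le
    have hsc := sin_sq_add_cos_sq φ
    field_simp
    rw [hq, hA, ← sub_eq_zero]
    have : cos φ ^ 2 = 1 - sin φ ^ 2 := by linarith
    rw [this]
    ring
  · simp [hτ0, hf0]
  · simp only [hτ0, hf'0, sin_neg, sin_pi_div_two, ampSpeed]
    have : (m : ℝ) = √((S + β) * ((S - β) / 2)) := by
      rw [eq_comm, Real.sqrt_eq_iff_mul_self_eq (by nlinarith) (by positivity)]
      nlinarith
    rw [this, Real.sqrt_mul (by linarith)]
    ring_nf

/-- The substitution `x = sin θ` in the complete elliptic integral. Only the interior of the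
interval of integration is used, so the singularity at `x = 1` is harmless. -/
lemma elliptic_integral_trig (k : ℝ) :
    ∫ x in (0:ℝ)..1, 1 / (√(1 - x ^ 2) * √(1 - k ^ 2 * x ^ 2)) =
      ∫ θ in (0:ℝ)..(π / 2), 1 / √(1 - k ^ 2 * sin θ ^ 2) := by
  have hinj : Set.InjOn sin (Set.Ioo 0 (π / 2)) :=
    injOn_sin.mono fun x (hx : x ∈ Set.Ioo 0 (π / 2)) =>
      (⟨by linarith [hx.1, pi_pos], hx.2.le⟩ : x ∈ Set.Icc (-(π / 2)) (π / 2))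
  have himg : sin '' Set.Ioo 0 (π / 2) = Set.Ioo 0 1 := by
    ext y
    constructor
    · rintro ⟨x, hx, rfl⟩
      refine ⟨sin_pos_of_pos_of_lt_pi hx.1 (by linarith [hx.2, pi_pos]), ?_⟩
      have := sin_lt_sin_of_lt_of_le_pi_div_two (by linarith [hx.1, pi_pos]) le_rfl hx.2
      simpa using this
    · rintro ⟨h0, h1⟩
      exact ⟨arcsin y, ⟨arcsin_pos.2 h0, arcsin_lt_pi_div_two.2 h1⟩,
        sin_arcsin (by linarith) h1.le⟩
  rw [intervalIntegral.integral_of_le zero_le_one, intervalIntegral.integral_of_le (by positivity),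
    MeasureTheory.integral_Ioc_eq_integral_Ioo, MeasureTheory.integral_Ioc_eq_integral_Ioo,
    ← himg, MeasureTheory.integral_image_eq_integral_abs_deriv_smul measurableSet_Ioo
      (fun x _ => (hasDerivAt_sin x).hasDerivWithinAt) hinj]
  refine MeasureTheory.setIntegral_congr_fun measurableSet_Ioo fun x hx => ?_
  have hc : 0 < cos x := cos_pos_of_mem_Ioo ⟨by linarith [hx.1, pi_pos], hx.2⟩
  have hs : √(1 - sin x ^ 2) = cos x := by
    rw [← cos_sq', Real.sqrt_sq hc.le]
  simp only [hs, abs_of_pos hc, smul_eq_mul]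
  field_simp

/-- `T = K(k) / (2m² + β²)^{1/4}`, where `K` is the complete elliptic integral
of the first kind. -/
theorem duffing_period (m : ℕ) (hm : 0 < m) (β T : ℝ) (f : ℝ → ℝ)
    (h : IsDuffingSolution m β T f) :
    T = (∫ x in (0:ℝ)..1,
          1 / (Real.sqrt (1 - x ^ 2) *
                Real.sqrt (1 - (duffingModulus m β) ^ 2 * x ^ 2))) /
        (2 * (m : ℝ) ^ 2 + β ^ 2) ^ ((1 : ℝ) / 4) := by
  obtain ⟨hT, -, -, -, hfT, -, -, hpos⟩ := id h
  have hm' : (0 : ℝ) < m := by exact_mod_cast hm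
  have hR : 0 < 2 * (m : ℝ) ^ 2 + β ^ 2 := by positivity
  set S := √(2 * (m : ℝ) ^ 2 + β ^ 2) with hSdef
  have hS0 : 0 < S := Real.sqrt_pos.2 hR
  have hS : S ^ 2 = 2 * (m : ℝ) ^ 2 + β ^ 2 := Real.sq_sqrt hR.le
  have hβS : |β| < S := by
    rw [← sqrt_sq_eq_abs]
    exact Real.sqrt_lt_sqrt (sq_nonneg _) (by nlinarith)
  have h₁ : -β < S := (neg_le_abs β).trans_lt hβS
  have h₂ : β < S := (le_abs_self β).trans_lt hβS
  have hAp : 0 < √(S + β) := Real.sqrt_pos.2 (by linarith)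
  have hwc : Continuous fun φ => 1 / ampSpeed S β φ :=
    continuous_const.div (continuous_ampSpeed S β) fun φ => (ampSpeed_pos h₁ h₂ φ).ne'
  set τ : ℝ → ℝ := fun φ => -T + ∫ θ in (-(π / 2))..φ, 1 / ampSpeed S β θ with hτdef
  have hτ : ∀ φ, HasDerivAt τ (1 / ampSpeed S β φ) φ := fun φ =>
    (hwc.integral_hasStrictDerivAt _ φ).hasDerivAt.const_add _
  have hτ0 : τ (-(π / 2)) = -T := by simp [hτdef]
  have hmono : StrictMono τ := strictMono_of_hasDerivAt_pos hτ
    fun φ => one_div_pos.2 (ampSpeed_pos h₁ h₂ φ)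
  have hπ : -(π / 2) < π / 2 := by linarith [pi_pos]
  have hend : τ (π / 2) = T := by
    rcases lt_trichotomy (τ (π / 2)) T with hlt | heq | hgt
    · have hval := solution_eq_cos h h₁ h₂ hS hτ hτ0 hπ.le fun φ hφ =>
        ⟨hτ0 ▸ hmono.monotone hφ.1, (hmono.monotone hφ.2).trans hlt.le⟩
      have := hpos (τ (π / 2)) ⟨hτ0 ▸ hmono hπ, hlt⟩
      simp [hval] at this
    · exact heq
    · obtain ⟨b, hb, hbT⟩ := intermediate_value_Ioo hπ.le
        (fun φ _ => (hτ φ).continuousAt.continuousWithinAt : ContinuousOn τ _)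
        (show T ∈ Set.Ioo _ _ from ⟨by linarith, hgt⟩)
      have hval := solution_eq_cos h h₁ h₂ hS hτ hτ0 hb.1.le fun φ hφ =>
        ⟨hτ0 ▸ hmono.monotone hφ.1, (hmono.monotone hφ.2).trans hbT.le⟩
      rw [hbT, hfT] at hval
      exact absurd hval (mul_pos hAp (cos_pos_of_mem_Ioo hb)).ne
  have heven : ∫ θ in (-(π / 2))..0, 1 / ampSpeed S β θ =
      ∫ θ in (0:ℝ)..(π / 2), 1 / ampSpeed S β θ := by
    have := intervalIntegral.integral_comp_neg (a := 0) (b := π / 2)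
      (fun θ => 1 / ampSpeed S β θ)
    simpa [ampSpeed] using this.symm
  have hhalf : T = ∫ θ in (0:ℝ)..(π / 2), 1 / ampSpeed S β θ := by
    have hsplit := intervalIntegral.integral_add_adjacent_intervals (μ := MeasureTheory.volume)
      (hwc.intervalIntegrable (-(π / 2)) 0) (hwc.intervalIntegrable 0 (π / 2))
    simp only [hτdef] at hend
    linarith
  have hk : duffingModulus m β ^ 2 = (S + β) / (2 * S) := by
    have h3 : (1 + β / S) / 2 = (S + β) / (2 * S) := by field_simp
    rw [duffingModulus, ← hSdef, h3, Real.sq_sqrt (div_nonneg (by linarith) (by linarith))]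
  have hroot : (2 * (m : ℝ) ^ 2 + β ^ 2) ^ ((1 : ℝ) / 4) = √S := by
    rw [hSdef, Real.sqrt_eq_rpow, Real.sqrt_eq_rpow, ← Real.rpow_mul hR.le]
    norm_num
  rw [elliptic_integral_trig, hroot, hk, ← intervalIntegral.integral_div]
  refine hhalf.trans (intervalIntegral.integral_congr fun θ _ => ?_)
  have h4 : S - (S + β) / 2 * sin θ ^ 2 = (1 - (S + β) / (2 * S) * sin θ ^ 2) * S := by
    field_simp
  simp only [ampSpeed]
  rw [h4, Real.sqrt_mul' _ hS0.le, div_div]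
end

section
/- If (T, f) solves the Duffing boundary value problem for (m, β), then ∫_{-T}^{T} f(t) dt = 2√2 · arcsin(k), where k = √((1 + β/√(2m² + β²))/2). -/
/-!
With `F t = ∫_{-T}^t f` and `θ = √2 · F`, the curve `z = (f² - β) + i √2 f'` satisfies
`z' = -i √2 f z`, so it is a rotation: `z = z(-T) · exp(-iθ)`. Put `R = √(2m² + β²)` and
`α = arcsin k`. Then `z(-T) = -β + i √2 m = R · exp(2iα)`, because `cos 2α = 1 - 2k² = -β/R` and
`0 ≤ sin 2α`. Real parts give `f² - β = R cos (2α - θ)` on `[-T, T]` (`duffing_sq_eq`).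

Hence `f` vanishes exactly where `cos (2α - θ) = cos 2α`. The angle `θ` starts at `0` and is
continuous; it cannot reach `4α` in the open interval, where `f > 0`, so
`0 < θ(T) ≤ 4α`. Thus `|2α - θ(T)| ≤ 2α ≤ π`, and `f(T) = 0` with injectivity of `cos` on `[0, π]`
leaves only `θ(T) = 4α`, which is the claim.
-/

open Real

/-- The angle `2 arcsin k` is the argument of `-β + i √2 m`, whose modulus is `√(2m² + β²)`. -/
lemma duffing_angle (m : ℕ) (hm : 0 < m) (β : ℝ) :
    √(2 * (m : ℝ) ^ 2 + β ^ 2) * cos (2 * arcsin (duffingModulus m β)) = -β ∧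
    √(2 * (m : ℝ) ^ 2 + β ^ 2) * sin (2 * arcsin (duffingModulus m β)) = √2 * m ∧
    0 < arcsin (duffingModulus m β) := by
  have hm' : (0 : ℝ) < m := by exact_mod_cast hm
  have hpos : 0 < 2 * (m : ℝ) ^ 2 + β ^ 2 := by positivity
  unfold duffingModulus
  set R := √(2 * (m : ℝ) ^ 2 + β ^ 2) with hR
  have hR0 : 0 < R := Real.sqrt_pos.2 hpos
  have hR2 : R ^ 2 = 2 * (m : ℝ) ^ 2 + β ^ 2 := Real.sq_sqrt hpos.le
  have hβ : |β| < R := Real.lt_sqrt_of_sq_lt (by rw [sq_abs]; nlinarith [pow_pos hm' 2])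
  obtain ⟨hβ1, hβ2⟩ := abs_lt.1 hβ
  have h1 : -1 < β / R := by rw [lt_div_iff₀ hR0]; linarith
  have h2 : β / R ≤ 1 := by rw [div_le_iff₀ hR0]; linarith
  set k := √((1 + β / R) / 2) with hk
  have hk0 : 0 < k := Real.sqrt_pos.2 (by linarith)
  have hk2 : k ^ 2 = (1 + β / R) / 2 := Real.sq_sqrt (by linarith)
  have hk1 : k ≤ 1 := by nlinarith
  have hα0 : 0 < arcsin k := Real.arcsin_pos.2 hk0
  have hs : sin (arcsin k) = k := Real.sin_arcsin (by linarith) hk1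
  have hcos : R * cos (2 * arcsin k) = -β := by
    have hc2 := Real.cos_sq' (arcsin k)
    rw [Real.cos_two_mul, hc2, hs, hk2]
    field_simp
    ring
  refine ⟨hcos, ?_, hα0⟩
  have hsin0 : 0 ≤ sin (2 * arcsin k) :=
    Real.sin_nonneg_of_nonneg_of_le_pi (by linarith) (by linarith [Real.arcsin_le_pi_div_two k])
  have hsc := Real.sin_sq_add_cos_sq (2 * arcsin k)
  have h22 : √(2 : ℝ) ^ 2 = 2 := Real.sq_sqrt (by norm_num)
  have hsq : (R * sin (2 * arcsin k)) ^ 2 = (√2 * m) ^ 2 := by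
    have : (R * cos (2 * arcsin k)) ^ 2 = β ^ 2 := by rw [hcos]; ring
    calc (R * sin (2 * arcsin k)) ^ 2
        = R ^ 2 * (sin (2 * arcsin k) ^ 2 + cos (2 * arcsin k) ^ 2)
          - (R * cos (2 * arcsin k)) ^ 2 := by ring
      _ = (√2 * m) ^ 2 := by rw [hsc, this, hR2, mul_pow, h22]; ring
  exact (sq_eq_sq₀ (by positivity) (by positivity)).1 hsq

/-- The real part of the rotation formula `z(t) = z(-T) · exp(-iθ(t))` for
`z = (f² - β) + i √2 f'` and `θ(t) = √2 ∫_{-T}^t f`. -/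
lemma duffing_rotation {m : ℕ} {β T : ℝ} {f : ℝ → ℝ} (h : IsDuffingSolution m β T f)
    {t : ℝ} (ht : t ∈ Set.Icc (-T) T) :
    f t ^ 2 - β = -β * cos (√2 * ∫ u in (-T)..t, f u)
      + √2 * m * sin (√2 * ∫ u in (-T)..t, f u) := by
  obtain ⟨hT, hf, hode, hl, -, hl', -, -⟩ := h
  have hfd : ∀ t, HasDerivAt f (deriv f t) t := fun t =>
    (hf.differentiable (by simp) t).hasDerivAt
  have hfd2 : ∀ t, HasDerivAt (deriv f) (deriv (deriv f) t) t := fun t =>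
    (((contDiff_infty_iff_deriv.1 hf).2).differentiable (by simp) t).hasDerivAt
  set θ : ℝ → ℝ := fun t => √2 * ∫ u in (-T)..t, f u with hθ
  have hθd : ∀ t, HasDerivAt θ (√2 * f t) t := fun t =>
    (intervalIntegral.integral_hasDerivAt_right (hf.continuous.intervalIntegrable _ _)
      hf.continuous.stronglyMeasurable.stronglyMeasurableAtFilter
      hf.continuous.continuousAt).const_mul _
  have hθ0 : θ (-T) = 0 := by simp [hθ]
  have h22 : √(2 : ℝ) * √2 = 2 := Real.mul_self_sqrt (by norm_num)
  -- `P + iQ = z · exp(iθ)` is constant on `[-T, T]`.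
  set P : ℝ → ℝ := fun t => (f t ^ 2 - β) * cos (θ t) - √2 * deriv f t * sin (θ t) with hP
  set Q : ℝ → ℝ := fun t => (f t ^ 2 - β) * sin (θ t) + √2 * deriv f t * cos (θ t) with hQ
  have hc : ∀ t, HasDerivAt (fun t => f t ^ 2 - β) (2 * f t * deriv f t) t := fun t => by
    refine (((hfd t).pow 2).sub_const β).congr_deriv ?_
    norm_num
  have hPd : ∀ t ∈ Set.Icc (-T) T, HasDerivAt P 0 t := fun t ht => by
    refine (((hc t).mul (hθd t).cos).sub
      (((hfd2 t).const_mul (√2)).mul (hθd t).sin)).congr_deriv ?_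
    rw [hode t ht]
    linear_combination (-deriv f t * cos (θ t) * f t) * h22
  have hQd : ∀ t ∈ Set.Icc (-T) T, HasDerivAt Q 0 t := fun t ht => by
    refine (((hc t).mul (hθd t).sin).add
      (((hfd2 t).const_mul (√2)).mul (hθd t).cos)).congr_deriv ?_
    rw [hode t ht]
    linear_combination (-deriv f t * sin (θ t) * f t) * h22
  have hPc : P t = P (-T) := constant_of_has_deriv_right_zero
    (fun x hx => (hPd x hx).continuousAt.continuousWithinAt)
    (fun x hx => (hPd x (Set.Ico_subset_Icc_self hx)).hasDerivWithinAt) t ht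
  have hQc : Q t = Q (-T) := constant_of_has_deriv_right_zero
    (fun x hx => (hQd x hx).continuousAt.continuousWithinAt)
    (fun x hx => (hQd x (Set.Ico_subset_Icc_self hx)).hasDerivWithinAt) t ht
  simp only [hP, hQ, hθ0, hl, hl', Real.cos_zero, Real.sin_zero] at hPc hQc
  have hsc := Real.sin_sq_add_cos_sq (θ t)
  change f t ^ 2 - β = -β * cos (θ t) + √2 * m * sin (θ t)
  linear_combination cos (θ t) * hPc + sin (θ t) * hQc - (f t ^ 2 - β) * hsc

lemma duffing_sq_eq {m : ℕ} (hm : 0 < m) {β T : ℝ} {f : ℝ → ℝ} (h : IsDuffingSolution m β T f)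
    {t : ℝ} (ht : t ∈ Set.Icc (-T) T) :
    f t ^ 2 = √(2 * (m : ℝ) ^ 2 + β ^ 2) *
      (cos (2 * arcsin (duffingModulus m β) - √2 * ∫ u in (-T)..t, f u)
        - cos (2 * arcsin (duffingModulus m β))) := by
  obtain ⟨hc, hs, -⟩ := duffing_angle m hm β
  have hrot := duffing_rotation h ht
  rw [Real.cos_sub]
  linear_combination hrot - (cos (√2 * ∫ u in (-T)..t, f u) - 1) * hc
    - sin (√2 * ∫ u in (-T)..t, f u) * hs

/-- `∫_{-T}^{T} f = 2√2 · arcsin k`. -/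
theorem duffing_integral_f (m : ℕ) (hm : 0 < m) (β T : ℝ) (f : ℝ → ℝ)
    (h : IsDuffingSolution m β T f) :
    (∫ t in (-T)..T, f t) = 2 * Real.sqrt 2 * Real.arcsin (duffingModulus m β) := by
  have hsq := fun {t : ℝ} => duffing_sq_eq hm h (t := t)
  obtain ⟨-, -, hα0⟩ := duffing_angle m hm β
  obtain ⟨hT, hf, -, -, hr, -, -, hfpos⟩ := h
  set α := arcsin (duffingModulus m β) with hα
  have hαpi : α ≤ π / 2 := Real.arcsin_le_pi_div_two _
  have hs2 : 0 < √(2 : ℝ) := by positivity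
  have h22 : √(2 : ℝ) * √2 = 2 := Real.mul_self_sqrt (by norm_num)
  have hR0 : 0 < √(2 * (m : ℝ) ^ 2 + β ^ 2) := by positivity
  set θ : ℝ → ℝ := fun t => √2 * ∫ u in (-T)..t, f u with hθ
  have hθ0 : θ (-T) = 0 := by simp [hθ]
  have hθc : Continuous θ := continuous_const.mul
    (intervalIntegral.continuous_primitive (fun a b => hf.continuous.intervalIntegrable a b) _)
  have hIpos : 0 < ∫ t in (-T)..T, f t :=
    intervalIntegral.intervalIntegral_pos_of_pos_on (hf.continuous.intervalIntegrable _ _)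
      hfpos (by linarith)
  have hθT : 0 < θ T := mul_pos hs2 hIpos
  -- At a time where `θ = 4α` the solution vanishes, so no interior time qualifies.
  have hle : θ T ≤ 4 * α := by
    by_contra! hlt
    obtain ⟨t, ht, hte⟩ := intermediate_value_Ioo (by linarith : -T ≤ T) hθc.continuousOn
      (show 4 * α ∈ Set.Ioo (θ (-T)) (θ T) from ⟨by rw [hθ0]; linarith, hlt⟩)
    have hz : f t ^ 2 = 0 := by
      rw [hsq ⟨ht.1.le, ht.2.le⟩]
      change _ * (cos (2 * α - θ t) - _) = 0
      rw [hte, show 2 * α - 4 * α = -(2 * α) by ring, Real.cos_neg, sub_self, mul_zero]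
    exact (pow_pos (hfpos t ht) 2).ne' hz
  have hcos : cos |2 * α - θ T| = cos (2 * α) := by
    have := hsq (t := T) ⟨by linarith, le_rfl⟩
    rw [hr, zero_pow two_ne_zero] at this
    rw [Real.cos_abs]
    exact sub_eq_zero.1 ((mul_eq_zero.1 this.symm).resolve_left hR0.ne')
  have hab : |2 * α - θ T| ≤ 2 * α := abs_le.2 ⟨by linarith, by linarith⟩
  have heq : |2 * α - θ T| = 2 * α := Real.injOn_cos
    ⟨abs_nonneg _, by linarith⟩ ⟨by linarith, by linarith⟩ hcos
  have hfin : √2 * (∫ t in (-T)..T, f t) = 4 * α := by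
    change θ T = 4 * α
    rcases (abs_eq (by linarith)).1 heq with h' | h' <;> linarith
  linear_combination (√2 / 2) * hfin - ((∫ t in (-T)..T, f t) / 2) * h22
end

section
/- Let R, t ∈ ℝ, let m be a positive integer, set β = -(R-8)/2, and let (T, f) solve the Duffing boundary value problem for (m, β). Then (2π²/m)·∫_{-T}^{T} f(s)·[ (R² - 12·f(s)²·R + 144·f'(s)² + 36·f(s)⁴)/3 + t·R² ] ds = (2π²/m)·(72m² + ((6t+59)/3)·R² - 272R + 960)·√2·arcsin(k) - 4π²·(19R - 120), where k = √((1 + β/√(2m² + β²))/2). -/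
/-!
With `D = √(2m² + β²)`, `P = f² - β` and `Q = √2 f'`, the Duffing equation says
`P' = √2 f Q` and `Q' = -√2 f P`, so `(P, Q)` rotates with angular speed `√2 f` on a circle;
its radius is `D` by the boundary values. If `θ = arcsin k`, then `D cos 2θ = -β` and
`D sin 2θ = √2 m`, so `P = D cos ψ` and `Q = -D sin ψ` for the angle
`ψ(s) = √2 ∫_{-T}^s f - 2θ` (`duffing_rotation`).

The boundary values at `T` give `ψ(T) ≡ 2θ` modulo `2π`. Since `ψ` increases from `-2θ` and
`ψ = 2θ` forces `f = 0`, which cannot happen in the interior, in fact `ψ(T) = 2θ`; that is,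
`∫ f = 2√2 θ` (`duffing_integral`).

Finally, the Duffing equation and the energy identity `P² + Q² = D²` turn the integrand of the
functional into a constant multiple of `f` plus the derivative of
`6 f² f' - (120 - 19R) f'`, whose boundary contribution is `2m(120 - 19R)`.
-/

open Real

/-- The angle `2 arcsin k` is the polar angle of `(-β, √2 m)`, and `0 < arcsin k < π/2`. -/
lemma duffingModulus_angle (m : ℕ) (hm : 0 < m) (β : ℝ) :
    0 < arcsin (duffingModulus m β) ∧ arcsin (duffingModulus m β) < π / 2 ∧
      √(2 * (m : ℝ) ^ 2 + β ^ 2) * cos (2 * arcsin (duffingModulus m β)) = -β ∧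
      √(2 * (m : ℝ) ^ 2 + β ^ 2) * sin (2 * arcsin (duffingModulus m β)) = √2 * m := by
  have hm' : (0 : ℝ) < m := by exact_mod_cast hm
  have hpos : 0 < 2 * (m : ℝ) ^ 2 + β ^ 2 := by positivity
  have hDsq : √(2 * (m : ℝ) ^ 2 + β ^ 2) ^ 2 = 2 * (m : ℝ) ^ 2 + β ^ 2 := sq_sqrt hpos.le
  have hD : 0 < √(2 * (m : ℝ) ^ 2 + β ^ 2) := sqrt_pos.2 hpos
  have hk : duffingModulus m β = √((1 + β / √(2 * (m : ℝ) ^ 2 + β ^ 2)) / 2) := rfl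
  set D := √(2 * (m : ℝ) ^ 2 + β ^ 2)
  set k := duffingModulus m β
  have hβ : |β| < D := abs_lt_of_sq_lt_sq (by nlinarith) hD.le
  obtain ⟨h1, h2⟩ := abs_lt.1 hβ
  have h3 : -1 < β / D := by rw [lt_div_iff₀ hD]; linarith
  have h4 : β / D < 1 := by rw [div_lt_iff₀ hD]; linarith
  have hk0 : 0 < k := by rw [hk]; apply sqrt_pos.2; linarith
  have hksq : k ^ 2 = (1 + β / D) / 2 := by rw [hk]; exact sq_sqrt (by linarith)
  have hk1 : k < 1 := by nlinarith
  have hθ0 : 0 < arcsin k := arcsin_pos.2 hk0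
  have hθ1 : arcsin k < π / 2 := arcsin_lt_pi_div_two.2 hk1
  have hsin : sin (arcsin k) = k := sin_arcsin (by linarith) hk1.le
  have hcos : D * cos (2 * arcsin k) = -β := by
    rw [cos_two_mul, cos_sq', hsin, hksq]
    field_simp
    ring
  refine ⟨hθ0, hθ1, hcos, ?_⟩
  have hs : 0 < sin (2 * arcsin k) := sin_pos_of_pos_of_lt_pi (by linarith) (by linarith)
  have h22 : √2 ^ 2 = (2 : ℝ) := sq_sqrt (by norm_num)
  rw [← sq_eq_sq₀ (by positivity) (by positivity), mul_pow, mul_pow, h22, sin_sq, mul_sub,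
    ← mul_pow, hcos, hDsq]
  ring

/-- In rotating coordinates the pair `(f² - β, √2 f')` is constant: it is the point at angle
`-ψ` on the circle of radius `√(2m² + β²)`, where `ψ` is `√2` times the primitive of `f`,
shifted by `2 arcsin k`. -/
lemma duffing_rotation_s12 (m : ℕ) (hm : 0 < m) (β T : ℝ) (f ψ : ℝ → ℝ)
    (h : IsDuffingSolution m β T f) (hψ : ∀ s, HasDerivAt ψ (√2 * f s) s)
    (hψ0 : ψ (-T) = -(2 * arcsin (duffingModulus m β))) :
    ∀ s ∈ Set.Icc (-T) T,
      f s ^ 2 - β = √(2 * (m : ℝ) ^ 2 + β ^ 2) * cos (ψ s) ∧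
      √2 * deriv f s = -(√(2 * (m : ℝ) ^ 2 + β ^ 2) * sin (ψ s)) := by
  obtain ⟨hT, hf, hode, hl, hr, hdl, hdr, hfpos⟩ := h
  obtain ⟨-, -, hcos, hsin⟩ := duffingModulus_angle m hm β
  set D := √(2 * (m : ℝ) ^ 2 + β ^ 2)
  set θ := arcsin (duffingModulus m β)
  have hf1 : ∀ s, HasDerivAt f (deriv f s) s := fun s =>
    (hf.differentiable (by simp) s).hasDerivAt
  have hf2 : ∀ s, HasDerivAt (deriv f) (deriv (deriv f) s) s := fun s =>
    ((hf.iterate_deriv 1).differentiable (by simp) s).hasDerivAt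
  have h22 : √2 * √2 = (2 : ℝ) := mul_self_sqrt (by norm_num)
  have hA : ∀ s, HasDerivAt (fun s => (f s ^ 2 - β) * cos (ψ s) - √2 * deriv f s * sin (ψ s))
      (-(√2 * sin (ψ s)) * (deriv (deriv f) s - (-(f s) ^ 3 + β * f s))) s := by
    intro s
    have := ((((hf1 s).pow 2).sub_const β).mul (hψ s).cos).sub
      (((hf2 s).const_mul (√2)).mul (hψ s).sin)
    refine this.congr_deriv ?_
    simp only [Pi.pow_apply]
    push_cast
    linear_combination (-f s * deriv f s * cos (ψ s)) * h22
  have hB : ∀ s, HasDerivAt (fun s => (f s ^ 2 - β) * sin (ψ s) + √2 * deriv f s * cos (ψ s))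
      ((√2 * cos (ψ s)) * (deriv (deriv f) s - (-(f s) ^ 3 + β * f s))) s := by
    intro s
    have := ((((hf1 s).pow 2).sub_const β).mul (hψ s).sin).add
      (((hf2 s).const_mul (√2)).mul (hψ s).cos)
    refine this.congr_deriv ?_
    simp only [Pi.pow_apply]
    push_cast
    linear_combination (-f s * deriv f s * sin (ψ s)) * h22
  intro s hs
  have hAs := constant_of_has_deriv_right_zero
    (fun x _ => (hA x).continuousAt.continuousWithinAt)
    (fun x hx => (by
      have := hA x
      rw [hode x ⟨hx.1, hx.2.le⟩, sub_self, mul_zero] at this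
      exact this.hasDerivWithinAt)) s hs
  have hBs := constant_of_has_deriv_right_zero
    (fun x _ => (hB x).continuousAt.continuousWithinAt)
    (fun x hx => (by
      have := hB x
      rw [hode x ⟨hx.1, hx.2.le⟩, sub_self, mul_zero] at this
      exact this.hasDerivWithinAt)) s hs
  simp only [hψ0, hl, hdl, cos_neg, sin_neg] at hAs hBs
  have hcs := sin_sq_add_cos_sq (2 * θ)
  have hcsψ := sin_sq_add_cos_sq (ψ s)
  -- The initial values of the two constants of motion are `D` and `0`.
  have hA0 : (f s ^ 2 - β) * cos (ψ s) - √2 * deriv f s * sin (ψ s) = D := by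
    rw [hAs]
    linear_combination D * hcs - cos (2 * θ) * hcos - sin (2 * θ) * hsin
  have hB0 : (f s ^ 2 - β) * sin (ψ s) + √2 * deriv f s * cos (ψ s) = 0 := by
    rw [hBs]
    linear_combination sin (2 * θ) * hcos - cos (2 * θ) * hsin
  constructor
  · linear_combination cos (ψ s) * hA0 + sin (ψ s) * hB0 - (f s ^ 2 - β) * hcsψ
  · linear_combination cos (ψ s) * hB0 - sin (ψ s) * hA0 - (√2 * deriv f s) * hcsψ

/-- The total rotation angle `√2 ∫ f` is exactly `4 arcsin k`: positivity of `f` in the interior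
excludes additional turns. The energy identity is recorded alongside. -/
lemma duffing_integral (m : ℕ) (hm : 0 < m) (β T : ℝ) (f : ℝ → ℝ)
    (h : IsDuffingSolution m β T f) :
    (∫ s in (-T)..T, f s) = 2 * √2 * arcsin (duffingModulus m β) ∧
    ∀ s ∈ Set.Icc (-T) T, deriv f s ^ 2 = m ^ 2 + β * f s ^ 2 - f s ^ 4 / 2 := by
  have hfc : Continuous f := h.2.1.continuous
  have h22 : √2 * √2 = (2 : ℝ) := mul_self_sqrt (by norm_num)
  have h2 : 0 < √2 := by positivity
  have hm' : (0 : ℝ) < m := by exact_mod_cast hm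
  have hpos : 0 < 2 * (m : ℝ) ^ 2 + β ^ 2 := by positivity
  have hDsq : √(2 * (m : ℝ) ^ 2 + β ^ 2) ^ 2 = 2 * (m : ℝ) ^ 2 + β ^ 2 := sq_sqrt hpos.le
  have hD : 0 < √(2 * (m : ℝ) ^ 2 + β ^ 2) := sqrt_pos.2 hpos
  obtain ⟨hθ0, hθ1, hcos, hsin⟩ := duffingModulus_angle m hm β
  obtain ⟨ψ, hψdef⟩ : ∃ ψ : ℝ → ℝ, ∀ s, ψ s =
      √2 * (∫ x in (-T)..s, f x) - 2 * arcsin (duffingModulus m β) := ⟨_, fun _ => rfl⟩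
  have hψ : ∀ s, HasDerivAt ψ (√2 * f s) s := by
    intro s
    rw [funext hψdef]
    exact (((hfc.integral_hasStrictDerivAt (-T) s).hasDerivAt).const_mul _).sub_const _
  have hψ0 : ψ (-T) = -(2 * arcsin (duffingModulus m β)) := by simp [hψdef]
  have hrot := duffing_rotation_s12 m hm β T f ψ h hψ hψ0
  obtain ⟨hT, -, -, -, hr, -, hdr, hfpos⟩ := h
  set D := √(2 * (m : ℝ) ^ 2 + β ^ 2)
  set θ := arcsin (duffingModulus m β)
  refine ⟨?_, fun s hs => ?_⟩
  · have hIpos : 0 < ∫ s in (-T)..T, f s :=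
      intervalIntegral.intervalIntegral_pos_of_pos_on (hfc.intervalIntegrable _ _) hfpos
        (by linarith)
    have hlow : -(2 * θ) < ψ T := by
      rw [hψdef]
      have := mul_pos h2 hIpos
      linarith
    have hup : ψ T ≤ 2 * θ := by
      by_contra! hlt
      obtain ⟨s, hs, hsψ⟩ := intermediate_value_Ioo (by linarith : -T ≤ T)
        (fun x _ => (hψ x).continuousAt.continuousWithinAt)
        (show 2 * θ ∈ Set.Ioo (ψ (-T)) (ψ T) from ⟨by rw [hψ0]; linarith, hlt⟩)
      have h1 := (hrot s (Set.Ioo_subset_Icc_self hs)).1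
      rw [hsψ, hcos] at h1
      have := pow_pos (hfpos s hs) 2
      linarith
    obtain ⟨hc, hs⟩ := hrot T ⟨by linarith, le_rfl⟩
    rw [hr] at hc
    rw [hdr] at hs
    have hc' : cos (ψ T) = cos (2 * θ) := mul_left_cancel₀ hD.ne' (by linarith)
    have hs' : sin (ψ T) = sin (2 * θ) := mul_left_cancel₀ hD.ne' (by linarith)
    have h1 : cos (ψ T - 2 * θ) = 1 := by
      rw [cos_sub, hc', hs', ← sq, ← sq, cos_sq_add_sin_sq]
    have h0 := (cos_eq_one_iff_of_lt_of_lt (by linarith) (by linarith [pi_pos])).1 h1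
    rw [hψdef] at h0
    apply mul_left_cancel₀ h2.ne'
    linear_combination h0 - 2 * θ * h22
  · obtain ⟨hc, hs'⟩ := hrot s hs
    have hcs := sin_sq_add_cos_sq (ψ s)
    have h3 : (f s ^ 2 - β) ^ 2 + (√2 * deriv f s) ^ 2 = D ^ 2 := by
      rw [hc, hs']
      linear_combination D ^ 2 * hcs
    linear_combination (h3 + hDsq - deriv f s ^ 2 * h22) / 2

/-- Value of the quadratic curvature functional `B_t` at the metric `g_m(R)`. -/
theorem quadratic_functional_value (m : ℕ) (hm : 0 < m) (R t T : ℝ) (f : ℝ → ℝ)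
    (h : IsDuffingSolution m (-(R - 8) / 2) T f) :
    (2 * π ^ 2 / (m : ℝ)) *
        ∫ s in (-T)..T, f s *
          ((R ^ 2 - 12 * (f s) ^ 2 * R + 144 * (deriv f s) ^ 2 + 36 * (f s) ^ 4) / 3
            + t * R ^ 2)
      = (2 * π ^ 2 / (m : ℝ)) *
          (72 * (m : ℝ) ^ 2 + ((6 * t + 59) / 3) * R ^ 2 - 272 * R + 960) *
          Real.sqrt 2 * Real.arcsin (duffingModulus m (-(R - 8) / 2))
        - 4 * π ^ 2 * (19 * R - 120) := by
  obtain ⟨hI, hE⟩ := duffing_integral m hm _ T f h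
  obtain ⟨hT, hf, hode, hl, hr, hdl, hdr, hfpos⟩ := h
  have hm' : (m : ℝ) ≠ 0 := by exact_mod_cast hm.ne'
  have hf1 : ∀ s, HasDerivAt f (deriv f s) s := fun s =>
    (hf.differentiable (by simp) s).hasDerivAt
  have hf2 : ∀ s, HasDerivAt (deriv f) (deriv (deriv f) s) s := fun s =>
    ((hf.iterate_deriv 1).differentiable (by simp) s).hasDerivAt
  have hfc : Continuous f := hf.continuous
  have hf'c : Continuous (deriv f) := (hf.iterate_deriv 1).continuous
  -- Half of the coefficient in the claim; the other factor `2` comes from `∫ f = 2√2 arcsin k`.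
  obtain ⟨c, hc⟩ : ∃ c : ℝ,
      c = 36 * (m : ℝ) ^ 2 + (t + 59 / 6) * R ^ 2 - 136 * R + 480 := ⟨_, rfl⟩
  have hG : ∀ s ∈ Set.uIcc (-T) T,
      HasDerivAt (fun s => 6 * (f s ^ 2 * deriv f s) - (120 - 19 * R) * deriv f s)
        (f s * ((R ^ 2 - 12 * (f s) ^ 2 * R + 144 * (deriv f s) ^ 2 + 36 * (f s) ^ 4) / 3
            + t * R ^ 2) - c * f s) s := by
    intro s hs
    rw [Set.uIcc_of_le (by linarith)] at hs
    have := ((((hf1 s).pow 2).mul (hf2 s)).const_mul 6).sub ((hf2 s).const_mul (120 - 19 * R))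
    refine this.congr_deriv ?_
    simp only [Pi.pow_apply]
    rw [hode s hs, hc]
    push_cast
    linear_combination (-36 * f s) * hE s hs
  have hcont : Continuous fun s => f s *
      ((R ^ 2 - 12 * (f s) ^ 2 * R + 144 * (deriv f s) ^ 2 + 36 * (f s) ^ 4) / 3
        + t * R ^ 2) := by fun_prop
  have hcont' : Continuous fun s => c * f s := by fun_prop
  have hFTC := intervalIntegral.integral_eq_sub_of_hasDerivAt hG
    ((hcont.sub hcont').intervalIntegrable _ _)
  rw [intervalIntegral.integral_sub (hcont.intervalIntegrable _ _)
    (hcont'.intervalIntegrable _ _), intervalIntegral.integral_const_mul, hI, hl, hr, hdl, hdr,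
    sub_eq_iff_eq_add] at hFTC
  rw [hFTC, hc]
  field_simp
  ring
end

section
/- Let f be a C^∞ positive function on an open interval. Then the Bach components satisfy the divergence-free identity (B₄[f])'(t) = (f'(t)/f(t)) · (B₃[f](t) - B₄[f](t)) for all t in the interval, where B₃[f] and B₄[f] are the explicitly defined differential expressions in f. -/
/-!
The quotients `ρ_i = f⁽ⁱ⁾/f` satisfy the Riccati-type rule `ρ_i' = ρ_{i+1} - ρ_1 ρ_i`
wherever `f ≠ 0` (`hasDerivAt_rho`), and `f' = ρ_1 f`. Differentiating the polynomial
expression `B₄` in `f, ρ_1, ρ_2, ρ_3` with these rules gives a polynomial in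
`f, ρ_1, …, ρ_4` that equals `ρ_1 (B₃ - B₄)` identically.
-/

open Real

/-- `ρ_i = f⁽ⁱ⁾/f`, the ratio of the `i`-th derivative of `f` to `f`. -/
noncomputable def rho (f : ℝ → ℝ) (i : ℕ) (t : ℝ) : ℝ := iteratedDeriv i f t / f t

/-- The component `B₁ = B₂` of the Bach tensor of the cohomogeneity-one metric `g(f)`. -/
noncomputable def B1 (f : ℝ → ℝ) (t : ℝ) : ℝ :=
  (-(rho f 4 t) + rho f 1 t * rho f 3 t + 2 * (rho f 2 t) ^ 2 - (rho f 1 t) ^ 2 * rho f 2 t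
    + 20 * (f t) ^ 2 * rho f 2 t + 20 * (f t) ^ 2 * (rho f 1 t) ^ 2
    - 48 * (f t) ^ 4 + 64 * (f t) ^ 2 - 11) / 6

/-- The component `B₂` of the Bach tensor of the cohomogeneity-one metric `g(f)`. -/
noncomputable def B2 (f : ℝ → ℝ) (t : ℝ) : ℝ :=
  (-(rho f 4 t) + rho f 1 t * rho f 3 t + 2 * (rho f 2 t) ^ 2 - (rho f 1 t) ^ 2 * rho f 2 t
    + 20 * (f t) ^ 2 * rho f 2 t + 20 * (f t) ^ 2 * (rho f 1 t) ^ 2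
    - 48 * (f t) ^ 4 + 64 * (f t) ^ 2 - 11) / 6

/-- The component `B₃` of the Bach tensor of the cohomogeneity-one metric `g(f)`. -/
noncomputable def B3 (f : ℝ → ℝ) (t : ℝ) : ℝ :=
  (2 * rho f 4 t - 4 * rho f 1 t * rho f 3 t - 3 * (rho f 2 t) ^ 2
    + 4 * (rho f 1 t) ^ 2 * rho f 2 t - 40 * (f t) ^ 2 * rho f 2 t
    - 20 * (f t) ^ 2 * (rho f 1 t) ^ 2 + 80 * (f t) ^ 4 - 96 * (f t) ^ 2 + 11) / 6

/-- The component `B₄` of the Bach tensor of the cohomogeneity-one metric `g(f)`. -/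
noncomputable def B4 (f : ℝ → ℝ) (t : ℝ) : ℝ :=
  (2 * rho f 1 t * rho f 3 t - (rho f 2 t) ^ 2 - 2 * (rho f 1 t) ^ 2 * rho f 2 t
    - 20 * (f t) ^ 2 * (rho f 1 t) ^ 2 + 16 * (f t) ^ 4 - 32 * (f t) ^ 2 + 11) / 6

theorem hasDerivAt_rho {f : ℝ → ℝ} (hf : ContDiff ℝ (⊤ : ℕ∞) f) (i : ℕ) {t : ℝ}
    (ht : f t ≠ 0) :
    HasDerivAt (rho f i) (rho f (i + 1) t - rho f 1 t * rho f i t) t := by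
  have h0 : HasDerivAt f (deriv f t) t := (hf.differentiable (by simp) t).hasDerivAt
  have hi : HasDerivAt (iteratedDeriv i f) (iteratedDeriv (i + 1) f t) t := by
    rw [iteratedDeriv_succ]
    exact (hf.differentiable_iteratedDeriv i (by exact_mod_cast WithTop.coe_lt_top i) t).hasDerivAt
  refine (hi.div h0 ht).congr_deriv ?_
  simp only [rho, iteratedDeriv_one]
  field_simp

/-- The divergence-free identity `(B₄)'\'' = (f'\''/f)(B₃ - B₄)`. -/
theorem bach_divergence_free (a b : ℝ) (f : ℝ → ℝ)
    (hf : ContDiff ℝ (⊤ : ℕ∞) f) (hpos : ∀ t ∈ Set.Ioo a b, 0 < f t) :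
    ∀ t ∈ Set.Ioo a b,
      deriv (B4 f) t = (deriv f t / f t) * (B3 f t - B4 f t) := by
  intro t ht
  have hne : f t ≠ 0 := (hpos t ht).ne'
  have h1 := hasDerivAt_rho hf 1 hne
  have h2 := hasDerivAt_rho hf 2 hne
  have h3 := hasDerivAt_rho hf 3 hne
  have hr : deriv f t / f t = rho f 1 t := by simp [rho, iteratedDeriv_one]
  have h0 : HasDerivAt f (rho f 1 t * f t) t := by
    rw [← hr, div_mul_cancel₀ _ hne]
    exact (hf.differentiable (by simp) t).hasDerivAt
  have hB := ((((((((h1.const_mul 2).mul h3).sub (h2.pow 2)).sub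
    (((h1.pow 2).const_mul 2).mul h2)).sub
    (((h0.pow 2).const_mul 20).mul (h1.pow 2))).add ((h0.pow 4).const_mul 16)).sub
    ((h0.pow 2).const_mul 32)).add_const 11).div_const 6
  rw [hr]
  refine Eq.trans (HasDerivAt.deriv (f := B4 f) hB) ?_
  simp only [B3, B4, Pi.pow_apply]
  push_cast
  ring
end

section
/- Let f be a C^∞ function on an open interval J with f > 0 and f' > 0 on J, so that t ↦ f(t)² is a diffeomorphism of J onto an open interval I, and let y be a C^∞ function on I such that f'(t)² = y(f(t)²) for all t ∈ J. Then B₄[f] = 0 on J if and only if 4·y(x)·y''(x) - y'(x)² = 20·y(x) - 16x² + 32x - 11 for all x ∈ I. -/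
/-!
Put `x = f²`. Differentiating `f'² = y(x)` in `t` and cancelling `2f' > 0` gives `f'' = f y'(x)`
(`second_deriv_eq`), and differentiating again gives `f''' = f' y'(x) + 2 f² f' y''(x)`
(`third_deriv_eq`). Substituting into `B₄`, the two terms `± 2 y y' / f²` cancel and
`6 B₄[f] = 4 y y'' - y'² - (20 y - 16 x² + 32 x - 11)` at `x = f(t)²`. As `t ↦ f(t)²` maps the
`t`-interval onto the `x`-interval, one side vanishes identically exactly when the other does.
-/

open Real

/-- Differentiating `f'² = y(f²)` and cancelling `2f' ≠ 0`; this holds on all of the interval, so it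
can be differentiated once more. -/
lemma second_deriv_eq (a b : ℝ) (f y : ℝ → ℝ)
    (hf : ContDiff ℝ (⊤ : ℕ∞) f) (hy : ContDiff ℝ (⊤ : ℕ∞) y)
    (hderiv_pos : ∀ t ∈ Set.Ioo a b, 0 < deriv f t)
    (hrel : ∀ t ∈ Set.Ioo a b, (deriv f t) ^ 2 = y ((f t) ^ 2)) :
    ∀ t ∈ Set.Ioo a b, deriv (deriv f) t = f t * deriv y ((f t) ^ 2) := by
  intro t ht
  have hf0 : HasDerivAt f (deriv f t) t :=
    (hf.differentiable (by simp)).differentiableAt.hasDerivAt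
  have hf1 : HasDerivAt (deriv f) (deriv (deriv f) t) t :=
    ((contDiff_infty_iff_deriv.mp hf).2.differentiable (by simp)).differentiableAt.hasDerivAt
  have hy0 : HasDerivAt y (deriv y ((f t) ^ 2)) ((f t) ^ 2) :=
    (hy.differentiable (by simp)).differentiableAt.hasDerivAt
  have hR := HasDerivAt.comp t hy0 (hf0.fun_pow 2)
  have hL := hf1.fun_pow 2
  have hev : (fun s => (deriv f s) ^ 2) =ᶠ[nhds t] (y ∘ fun s => (f s) ^ 2) := by
    filter_upwards [isOpen_Ioo.mem_nhds ht] with s hs using hrel s hs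
  have h := hL.unique (hR.congr_of_eventuallyEq hev)
  have hp := (hderiv_pos t ht).ne'
  apply mul_left_cancel₀ hp
  norm_num at h
  linarith

lemma third_deriv_eq (a b : ℝ) (f y : ℝ → ℝ)
    (hf : ContDiff ℝ (⊤ : ℕ∞) f) (hy : ContDiff ℝ (⊤ : ℕ∞) y)
    (h2 : ∀ t ∈ Set.Ioo a b, deriv (deriv f) t = f t * deriv y ((f t) ^ 2)) :
    ∀ t ∈ Set.Ioo a b, deriv (deriv (deriv f)) t =
      deriv f t * deriv y ((f t) ^ 2)
        + 2 * (f t) ^ 2 * deriv f t * deriv (deriv y) ((f t) ^ 2) := by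
  intro t ht
  have hf0 : HasDerivAt f (deriv f t) t :=
    (hf.differentiable (by simp)).differentiableAt.hasDerivAt
  have hy1 : HasDerivAt (deriv y) (deriv (deriv y) ((f t) ^ 2)) ((f t) ^ 2) :=
    ((contDiff_infty_iff_deriv.mp hy).2.differentiable (by simp)).differentiableAt.hasDerivAt
  have hR := hf0.mul (HasDerivAt.comp t hy1 (hf0.fun_pow 2))
  have hev : deriv (deriv f) =ᶠ[nhds t] (f * (deriv y ∘ fun s => (f s) ^ 2)) := by
    filter_upwards [isOpen_Ioo.mem_nhds ht] with s hs using h2 s hs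
  rw [(hR.congr_of_eventuallyEq hev).deriv]
  norm_num
  ring

/-- Change of variables `x = f²`, `y = (f')²` transforms the Bach-flat equation
`B₄[f] = 0` into `4yy'\'''\'' - (y'\'')² = 20y - 16x² + 32x - 11`. -/
theorem bach_flat_change_of_variables (a b c d : ℝ) (f y : ℝ → ℝ)
    (hf : ContDiff ℝ (⊤ : ℕ∞) f) (hy : ContDiff ℝ (⊤ : ℕ∞) y)
    (hpos : ∀ t ∈ Set.Ioo a b, 0 < f t)
    (hderiv_pos : ∀ t ∈ Set.Ioo a b, 0 < deriv f t)
    (hmaps : Set.MapsTo (fun t => (f t) ^ 2) (Set.Ioo a b) (Set.Ioo c d))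
    (hsurj : Set.SurjOn (fun t => (f t) ^ 2) (Set.Ioo a b) (Set.Ioo c d))
    (hrel : ∀ t ∈ Set.Ioo a b, (deriv f t) ^ 2 = y ((f t) ^ 2)) :
    (∀ t ∈ Set.Ioo a b, B4 f t = 0) ↔
      (∀ x ∈ Set.Ioo c d,
        4 * y x * deriv (deriv y) x - (deriv y x) ^ 2
          = 20 * y x - 16 * x ^ 2 + 32 * x - 11) := by
  have h2 := second_deriv_eq a b f y hf hy hderiv_pos hrel
  have h3 := third_deriv_eq a b f y hf hy h2
  have key : ∀ t ∈ Set.Ioo a b, 6 * B4 f t =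
      4 * y ((f t) ^ 2) * deriv (deriv y) ((f t) ^ 2) - (deriv y ((f t) ^ 2)) ^ 2
        - (20 * y ((f t) ^ 2) - 16 * ((f t) ^ 2) ^ 2 + 32 * (f t) ^ 2 - 11) := by
    intro t ht
    have hp := (hpos t ht).ne'
    simp only [B4, rho, iteratedDeriv_succ, iteratedDeriv_zero]
    rw [h3 t ht, h2 t ht, ← hrel t ht]
    field_simp
    ring
  constructor
  · intro h x hx
    obtain ⟨t, ht, rfl⟩ := hsurj hx
    have := key t ht
    rw [h t ht] at this
    dsimp only
    linarith
  · intro h t ht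
    have := key t ht
    have h' := h _ (hmaps ht)
    dsimp only at h'
    linarith
end

section
/- Let f be a C^∞ positive function on an open interval satisfying f''(t) = 2f(t)³ - 2f(t) and f'(t)² = f(t)⁴ - 2f(t)² + 7/12 for all t. Then B₄[f] vanishes identically; that is, f is a particular solution of the Bach-flat equation B₄ = 0. -/
/-!
Differentiating `f'' = 2f³ - 2f` gives `f''' = (6f² - 2) f'`, so `ρ₂ = 2f² - 2` and
`ρ₃ = (6f² - 2) ρ₁`. In `6 B₄` the terms containing `ρ₁` then collapse to `-12 f² ρ₁² = -12 (f')²`,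
and the remaining ones sum to `12 f⁴ - 24 f² + 7`; the first integral makes these cancel.
The argument is local (`B4_eq_zero_of_contDiffOn`): only the smoothness of `f` on the interval
matters.
-/

open Real

/-- The vanishing of `B₄` for `f` smooth merely on the interval. -/
theorem B4_eq_zero_of_contDiffOn (a b : ℝ) (f : ℝ → ℝ)
    (hf : ContDiffOn ℝ (⊤ : ℕ∞) f (Set.Ioo a b)) (hpos : ∀ t ∈ Set.Ioo a b, 0 < f t)
    (hode : ∀ t ∈ Set.Ioo a b, deriv (deriv f) t = 2 * (f t) ^ 3 - 2 * f t)
    (hfi : ∀ t ∈ Set.Ioo a b, (deriv f t) ^ 2 = (f t) ^ 4 - 2 * (f t) ^ 2 + 7 / 12) :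
    ∀ t ∈ Set.Ioo a b, B4 f t = 0 := by
  intro t ht
  have hnhds : Set.Ioo a b ∈ nhds t := isOpen_Ioo.mem_nhds ht
  have hd : HasDerivAt f (deriv f t) t :=
    ((hf.contDiffAt hnhds).differentiableAt (by simp)).hasDerivAt
  have h1 : iteratedDeriv 1 f t = deriv f t := by rw [iteratedDeriv_one]
  have h2 : iteratedDeriv 2 f t = 2 * (f t) ^ 3 - 2 * f t := by
    rw [iteratedDeriv_succ, iteratedDeriv_one, hode t ht]
  have h3 : iteratedDeriv 3 f t = (6 * (f t) ^ 2 - 2) * deriv f t := by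
    rw [iteratedDeriv_succ, iteratedDeriv_succ, iteratedDeriv_one]
    -- The ODE holds on a neighbourhood of `t`, so it may be differentiated at `t`.
    have hev : deriv (deriv f) =ᶠ[nhds t] fun s => 2 * (f s) ^ 3 - 2 * f s :=
      Filter.eventually_of_mem hnhds hode
    rw [hev.deriv_eq]
    have h := ((hd.pow 3).const_mul 2).sub (hd.const_mul 2)
    refine h.deriv.trans ?_
    norm_num
    ring
  have hne : f t ≠ 0 := (hpos t ht).ne'
  unfold B4 rho
  rw [h1, h2, h3]
  field_simp
  linear_combination (-12 * (f t) ^ 2) * hfi t ht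

/-- The particular solution `(f')² = f⁴ - 2f² + 7/12` of the Bach-flat equation. -/
theorem bach_flat_particular_solution_one (a b : ℝ) (f : ℝ → ℝ)
    (hf : ContDiff ℝ (⊤ : ℕ∞) f) (hpos : ∀ t ∈ Set.Ioo a b, 0 < f t)
    (hode : ∀ t ∈ Set.Ioo a b, deriv (deriv f) t = 2 * (f t) ^ 3 - 2 * f t)
    (hfi : ∀ t ∈ Set.Ioo a b, (deriv f t) ^ 2 = (f t) ^ 4 - 2 * (f t) ^ 2 + 7 / 12) :
    ∀ t ∈ Set.Ioo a b, B4 f t = 0 :=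
  B4_eq_zero_of_contDiffOn a b f hf.contDiffOn hpos hode hfi
end

section
/- Let f be a C^∞ positive function on an open interval satisfying f''(t) = 8f(t)³ - 8f(t) and f'(t)² = 4f(t)⁴ - 8f(t)² + 53/12 for all t. Then B₄[f] vanishes identically; that is, f is a particular solution of the Bach-flat equation B₄ = 0. -/
/-!
Differentiating `f'' = 8f³ - 8f` gives `f''' = (24f² - 8) f'`. Substituting `f''` and `f'''` into
`6 B₄`, all negative powers of `f` cancel and there remains `12 f'² - 48 f⁴ + 96 f² - 53`, which is
zero by the relation `f'² = 4f⁴ - 8f² + 53/12`.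
-/

open Real

/-- The particular solution `(f')² = 4f⁴ - 8f² + 53/12` of the Bach-flat equation. -/
theorem bach_flat_particular_solution_two (a b : ℝ) (f : ℝ → ℝ)
    (hf : ContDiff ℝ (⊤ : ℕ∞) f) (hpos : ∀ t ∈ Set.Ioo a b, 0 < f t)
    (hode : ∀ t ∈ Set.Ioo a b, deriv (deriv f) t = 8 * (f t) ^ 3 - 8 * f t)
    (hfi : ∀ t ∈ Set.Ioo a b,
      (deriv f t) ^ 2 = 4 * (f t) ^ 4 - 8 * (f t) ^ 2 + 53 / 12) :
    ∀ t ∈ Set.Ioo a b, B4 f t = 0 := by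
  intro t ht
  have hne : f t ≠ 0 := (hpos t ht).ne'
  have hd : DifferentiableAt ℝ f t := hf.differentiable (by simp) t
  -- The ODE holds on a neighbourhood of `t`, so it may be differentiated there.
  have hnear : deriv (deriv f) =ᶠ[nhds t] fun s => 8 * (f s) ^ 3 - 8 * f s := by
    filter_upwards [isOpen_Ioo.mem_nhds ht] with s hs using hode s hs
  have h3 : deriv (deriv (deriv f)) t = (24 * (f t) ^ 2 - 8) * deriv f t := by
    rw [hnear.deriv_eq]
    have h := ((hd.hasDerivAt.pow 3).const_mul 8).sub (hd.hasDerivAt.const_mul 8)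
    refine h.deriv.trans ?_
    norm_num
    ring
  have hp := hfi t ht
  have e1 : iteratedDeriv 1 f t = deriv f t := by rw [iteratedDeriv_one]
  have e2 : iteratedDeriv 2 f t = 8 * (f t) ^ 3 - 8 * f t := by
    rw [iteratedDeriv_succ, iteratedDeriv_one, hode t ht]
  have e3 : iteratedDeriv 3 f t = (24 * (f t) ^ 2 - 8) * deriv f t := by
    rw [iteratedDeriv_succ, iteratedDeriv_succ, iteratedDeriv_one, h3]
  simp only [B4, rho, e1, e2, e3]
  field_simp
  -- With denominators cleared, what remains is `f² (12 f'² - 48 f⁴ + 96 f² - 53) = 0`.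
  linear_combination (12 * f t ^ 2) * hp
end
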